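/- arXiv:1801.04988 — 2 statements merged into one kernel-verified Lean document; each statement's English description precedes it below -/
import Mathlib

section
/- Let φ: X → (−∞,∞] be a lower semicontinuous functional on the complete metric space (X,d), let p ∈ [1,∞], and let g: X → [0,∞] be a Borel map such that for every curve ϑ ∈ AC²([a,b];X) with φ∘ϑ ∈ L^{2p}(a,b) one has |φ(ϑ(b)) − φ(ϑ(a))| ≤ (1/2) ∫_a^b ( |ϑ'|²(t) + g²(ϑ(t)) ) dt. Then g is an L^p-moderated upper gradient for φ. -/
/-!
The energy inequality of the criterion becomes the upper gradient inequality when the curve is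
traversed with speed (almost) equal to `g`, since then `(|ϑ'|² + g²) / 2 ≈ g |ϑ'|`.

Given `u` on `[s, t]` with speed `m`, and `δ > 0`, put `h = g ∘ u + δ (1 + ψ)` where
`ψ = |φ ∘ u| ^ p` (and `ψ = 0` for `p = ∞`). By hypothesis `h m` is integrable. Introduce the new
time `T r = ∫_s^r m / h`, let `σ` be its generalized inverse and `ϑ = u ∘ σ`. Then `ϑ` has speed
`h ∘ σ` (`exists_reparametrization`), and integrals `dτ` in the new time are integrals `(m / h) dr`
in the old one (`exists_timeChange`). Hence

* `∫ |ϑ'|² dτ = ∫ h m dr < ∞`, so that `ϑ` is in `AC²`;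
* `∫ |φ ∘ ϑ| ^ (2p) dτ = ∫ ψ² m / h dr ≤ δ⁻¹ ∫ ψ m dr < ∞`, so that the criterion applies;
* `(1/2) ∫ (|ϑ'|² + g²(ϑ)) dτ ≤ ∫ h m dr = ∫ g(u) m dr + δ ∫ (1 + ψ) m dr`

(`perturbed_estimate`), and `δ → 0` gives the claim. The function `T` is flat exactly where `u`
stands still, which is why `u ∘ σ` runs through the same points although `σ` may jump.
-/

open MeasureTheory Filter Topology Set ENNReal

noncomputable section

namespace WED

variable {X : Type*} [MetricSpace X]

/-- The exponential probability measure `μ_ε = ε⁻¹ e^{-t/ε} dt` on `(0,∞)`. -/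
def expMeasure (ε : ℝ) : Measure ℝ :=
  (volume.restrict (Ioi (0:ℝ))).withDensity fun t => ENNReal.ofReal (ε⁻¹ * Real.exp (-t / ε))

/-- The positive part of an extended real, as an extended nonnegative real. -/
def epos (x : EReal) : ℝ≥0∞ := if x = ⊤ then ⊤ else ENNReal.ofReal x.toReal

/-- The absolute value of an extended real, as an extended nonnegative real. -/
def eabs (x : EReal) : ℝ≥0∞ := epos x ⊔ epos (-x)

/-- The (extended-real valued) integral of an extended-real valued function, defined as the
difference between the integrals of the positive and of the negative part. -/
def eIntegral (μ : Measure ℝ) (f : ℝ → EReal) : EReal :=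
  ((∫⁻ t, epos (f t) ∂μ : ℝ≥0∞) : EReal) - ((∫⁻ t, epos (-f t) ∂μ : ℝ≥0∞) : EReal)

/-- `m` is *the* metric derivative of the curve `u` on the set `I ⊆ ℝ`:  `m` is a nonnegative
locally integrable function, `d(u s, u t) ≤ ∫_s^t m` (so that `u` is absolutely continuous),
and `m t` is the limit of the difference quotients `d(u s, u t)/|s-t|` at a.e. `t ∈ I`. -/
structure IsMetricDerivOn (u : ℝ → X) (m : ℝ → ℝ) (I : Set ℝ) : Prop where
  nonneg : ∀ t, 0 ≤ m t
  locInt : ∀ s ∈ I, ∀ t ∈ I, IntegrableOn m (Icc s t) volume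
  dist_le : ∀ s ∈ I, ∀ t ∈ I, s ≤ t → dist (u s) (u t) ≤ ∫ r in Icc s t, m r
  limit : ∀ᵐ t ∂(volume.restrict I),
    Tendsto (fun s => dist (u s) (u t) / |s - t|) (𝓝[I \ {t}] t) (𝓝 (m t))

/-- `u ∈ AC²_loc(I; X)`, with metric derivative `m`. -/
def AC2LocOn (u : ℝ → X) (m : ℝ → ℝ) (I : Set ℝ) : Prop :=
  IsMetricDerivOn u m I ∧ ∀ s ∈ I, ∀ t ∈ I, IntegrableOn (fun r => m r ^ 2) (Icc s t) volume

/-- `u ∈ AC²(I; X)`, with metric derivative `m`. -/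
def AC2On (u : ℝ → X) (m : ℝ → ℝ) (I : Set ℝ) : Prop :=
  IsMetricDerivOn u m I ∧ IntegrableOn (fun r => m r ^ 2) I volume

/-- The integrand `(ε/2)|u'|²(t) + φ(u(t))` of the WED functional. -/
def wedIntegrand (φ : X → EReal) (ε : ℝ) (u : ℝ → X) (m : ℝ → ℝ) (t : ℝ) : EReal :=
  ((ε / 2 * m t ^ 2 : ℝ) : EReal) + φ (u t)

/-- The WED functional `I_ε[u] = ∫₀^∞ ((ε/2)|u'|² + φ(u)) dμ_ε`. -/
def WEDfun (φ : X → EReal) (ε : ℝ) (u : ℝ → X) (m : ℝ → ℝ) : EReal :=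
  eIntegral (expMeasure ε) (wedIntegrand φ ε u m)

/-- The admissible class `𝒜_x^ε`: curves `u ∈ AC²_loc([0,∞);X)` (with metric derivative `m`)
with `u 0 = x` and `∫₀^∞ |u'|² dμ_ε < ∞`. -/
def Admissible (ε : ℝ) (x : X) (u : ℝ → X) (m : ℝ → ℝ) : Prop :=
  u 0 = x ∧ AC2LocOn u m (Ici 0) ∧
    (∫⁻ t, ENNReal.ofReal (m t ^ 2) ∂expMeasure ε) < ⊤

/-- The value function `V_ε(x) = inf { I_ε[u] : u ∈ 𝒜_x^ε }`. -/
def Veps (φ : X → EReal) (ε : ℝ) (x : X) : EReal :=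
  ⨅ (p : {p : (ℝ → X) × (ℝ → ℝ) // Admissible ε x p.1 p.2}),
    WEDfun φ ε p.1.1 p.1.2

/-- `u` (with metric derivative `m`) minimizes the WED functional `I_ε` over `𝒜_x^ε`. -/
def IsMinimizer (φ : X → EReal) (ε : ℝ) (x : X) (u : ℝ → X) (m : ℝ → ℝ) : Prop :=
  Admissible ε x u m ∧
    ∀ v n, Admissible ε x v n → WEDfun φ ε u m ≤ WEDfun φ ε v n

/-- The compatibility conditions (MT1), (MT2) between the distance `d` and the auxiliary
topology `σ`. -/
structure Compatible (σ : TopologicalSpace X) : Prop where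
  mt1 : ∀ (u v : ℕ → X) (x y : X), Tendsto u atTop (@nhds X σ x) →
    Tendsto v atTop (@nhds X σ y) →
    ENNReal.ofReal (dist x y) ≤ Filter.liminf (fun n => ENNReal.ofReal (dist (u n) (v n))) atTop
  mt2 : ∀ U : Set X, IsOpen[σ] U → ∀ x ∈ U, ∃ V : Set X, IsOpen[σ] V ∧ x ∈ V ∧
    ∃ δ : ℝ, 0 < δ ∧ ∀ y : X, Metric.infDist y V < δ → y ∈ U

/-- The standard lower semicontinuity–compactness–coercivity (LSCC) assumptions on a proper
functional `φ : X → (-∞,∞]`, with respect to the auxiliary topology `σ`. -/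
structure LSCC (σ : TopologicalSpace X) (φ : X → EReal) (ustar : X) (A B : ℝ) : Prop where
  hA : 0 ≤ A
  hB : 0 ≤ B
  proper : ∃ x, φ x ≠ ⊤
  ne_bot : ∀ x, φ x ≠ ⊥
  lsc : ∀ (u : ℕ → X) (x : X), (∃ C : ℝ, ∀ n k, dist (u n) (u k) ≤ C) →
    Tendsto u atTop (@nhds X σ x) → φ x ≤ Filter.liminf (fun n => φ (u n)) atTop
  cpt : ∀ u : ℕ → X, (∃ C : ℝ, ∀ n, φ (u n) ≤ (C : EReal)) →
    (∃ C : ℝ, ∀ n k, dist (u n) (u k) ≤ C) →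
    ∃ (x : X) (j : ℕ → ℕ), StrictMono j ∧ Tendsto (u ∘ j) atTop (@nhds X σ x)
  coercive : ∀ u v : X, ((-(B * dist u v ^ 2 + (B * dist v ustar ^ 2 + A)) : ℝ) : EReal) ≤ φ u

/-- The local (descending) slope `|∂φ|(x) = limsup_{v→x} (φ(x)-φ(v))⁺/d(x,v)`. -/
def slope (φ : X → EReal) (x : X) : ℝ≥0∞ :=
  Filter.limsup (fun v => epos (φ x - φ v) / ENNReal.ofReal (dist x v)) (𝓝[≠] x)

/-- The relaxed slope `|∂⁻φ|`: the σ-sequential lower semicontinuous envelope of the local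
slope along `d`-bounded sequences with bounded energy. -/
def relaxedSlope (σ : TopologicalSpace X) (φ : X → EReal) (x : X) : ℝ≥0∞ :=
  ⨅ (u : ℕ → X) (_ : Tendsto u atTop (@nhds X σ x))
    (_ : ∃ C : ℝ, ∀ n, dist (u n) x ≤ C ∧ φ (u n) ≤ (C : EReal)),
    Filter.liminf (fun n => slope φ (u n)) atTop

/-- `G_ε(x) = sqrt(2(φ(x) - V_ε(x))/ε)` if `V_ε(x) < ∞`, and `∞` otherwise. -/
def Geps (φ : X → EReal) (ε : ℝ) (x : X) : ℝ≥0∞ :=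
  if Veps φ ε x = ⊤ then ⊤
  else (2 * epos (φ x - Veps φ ε x) / ENNReal.ofReal ε) ^ (1/2 : ℝ)

/-- The measure `|u'| dt` on `I` associated with the speed `m` of a curve. -/
def speedMeasure (m : ℝ → ℝ) (I : Set ℝ) : Measure ℝ :=
  (volume.restrict I).withDensity fun t => ENNReal.ofReal (m t)

/-- Membership in `L^p(μ)`, `p ∈ [1,∞]`, for an `ℝ≥0∞`-valued function. -/
def MemLpENN (f : ℝ → ℝ≥0∞) (p : ℝ≥0∞) (μ : Measure ℝ) : Prop :=
  if p = ⊤ then ∃ C : ℝ≥0∞, C ≠ ⊤ ∧ ∀ᵐ t ∂μ, f t ≤ C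
  else (∫⁻ t, f t ^ p.toReal ∂μ) < ⊤

/-- `g` is an `L^p`-moderated upper gradient for `φ`: for every absolutely continuous curve
`u` (with metric derivative `m`) on a compact interval such that `φ∘u ∈ L^p(|u'|dt)` and
`g∘u ∈ L¹(|u'|dt)`, one has `|φ(u t) - φ(u s)| ≤ ∫_s^t g(u r) |u'|(r) dr`. -/
def IsModeratedUpperGradient (φ : X → EReal) (g : X → ℝ≥0∞) (p : ℝ≥0∞) : Prop :=
  ∀ (a b : ℝ), a ≤ b → ∀ (u : ℝ → X) (m : ℝ → ℝ), IsMetricDerivOn u m (Icc a b) →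
    MemLpENN (fun t => eabs (φ (u t))) p (speedMeasure m (Icc a b)) →
    (∫⁻ t in Icc a b, g (u t) * ENNReal.ofReal (m t)) < ⊤ →
    ∀ s ∈ Icc a b, ∀ t ∈ Icc a b, s ≤ t →
      (φ (u t) ≤ φ (u s) + ((∫⁻ r in Icc s t, g (u r) * ENNReal.ofReal (m r) : ℝ≥0∞) : EReal) ∧
       φ (u s) ≤ φ (u t) + ((∫⁻ r in Icc s t, g (u r) * ENNReal.ofReal (m r) : ℝ≥0∞) : EReal))

/-- A real function `f` is locally absolutely continuous on `[0,∞)` with density `g`. -/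
def RealACLoc (f g : ℝ → ℝ) : Prop :=
  (∀ b : ℝ, 0 ≤ b → IntegrableOn g (Icc 0 b) volume) ∧
  ∀ t : ℝ, 0 ≤ t → f t = f 0 + ∫ r in Icc 0 t, g r

/-- A real function `f` belongs to `AC²_loc([0,∞);ℝ)`, with derivative `g`. -/
def RealAC2Loc (f g : ℝ → ℝ) : Prop :=
  RealACLoc f g ∧ ∀ b : ℝ, 0 ≤ b → IntegrableOn (fun t => g t ^ 2) (Icc 0 b) volume

/-- The compact-open topology on curves `[0,∞) → X` induced by the auxiliary topology `σ`. -/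
def compactOpenOf (σ : TopologicalSpace X) : TopologicalSpace (ℝ → X) :=
  TopologicalSpace.generateFrom
    {S | ∃ (K : Set ℝ) (U : Set X), K ⊆ Ici 0 ∧ IsCompact K ∧ IsOpen[σ] U ∧
      S = {f : ℝ → X | MapsTo f K U}}

/-- The WED slope `|∂_w φ|(x) = limsup_{ε↓0} G_ε(x)`. -/
def wedSlope (φ : X → EReal) (x : X) : ℝ≥0∞ :=
  Filter.limsup (fun ε => Geps φ ε x) (𝓝[>] (0:ℝ))

/-- The relaxed WED slope `|∂_w^- φ|`. -/
def relaxedWedSlope (σ : TopologicalSpace X) (φ : X → EReal) (x : X) : ℝ≥0∞ :=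
  ⨅ (u : ℕ → X) (_ : Tendsto u atTop (@nhds X σ x))
    (_ : ∃ C : ℝ, ∀ n, dist (u n) x ≤ C ∧ φ (u n) ≤ (C : EReal)),
    Filter.liminf (fun n => wedSlope φ (u n)) atTop

/-- The φ-conditioned local slope `|∂̃ψ|(x) = limsup_{v→x, φ(v)→φ(x)} (ψ(x)-ψ(v))⁺/d(x,v)`. -/
def condSlope (φ ψ : X → EReal) (x : X) : ℝ≥0∞ :=
  Filter.limsup (fun v => epos (ψ x - ψ v) / ENNReal.ofReal (dist x v))
    ((𝓝[≠] x) ⊓ Filter.comap φ (𝓝 (φ x)))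

/-- `φ` is geodesically `λ`-convex: every pair of points of `D(φ)` is joined by a
constant-speed geodesic along which `φ` is `λ`-convex. -/
def GeodesicLambdaConvex (φ : X → EReal) (lam : ℝ) : Prop :=
  ∀ v₀ v₁ : X, φ v₀ ≠ ⊤ → φ v₁ ≠ ⊤ → ∃ γ : ℝ → X, γ 0 = v₀ ∧ γ 1 = v₁ ∧
    (∀ s ∈ Icc (0:ℝ) 1, ∀ t ∈ Icc (0:ℝ) 1, dist (γ s) (γ t) = |t - s| * dist v₀ v₁) ∧
    ∀ t ∈ Icc (0:ℝ) 1, φ (γ t) ≤ ((1 - t : ℝ) : EReal) * φ v₀ + ((t : ℝ) : EReal) * φ v₁ -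
      ((lam / 2 * t * (1 - t) * dist v₀ v₁ ^ 2 : ℝ) : EReal)

end WED

namespace WED

/-! ### Inverting a time change -/

/-- The generalized inverse `σ` of the nondecreasing function `T r = ∫_s^r w`. It is a right inverse
of `T`, it satisfies the Galois relation `σ τ ≤ r ↔ τ ≤ T r`, and it pushes Lebesgue measure on
`[0, T t]` forward to `w dr` on `[s, t]`. The function `T` may have flat parts, on which `σ` jumps. -/
theorem exists_timeChange {w : ℝ → ℝ} (hw : Integrable w volume) (hw0 : ∀ r, 0 ≤ w r)
    {s t : ℝ} (hst : s ≤ t) :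
    ∃ σ : ℝ → ℝ, Monotone σ ∧ (∀ τ, σ τ ∈ Icc s t) ∧ σ 0 = s ∧
      (∀ τ ∈ Icc 0 (∫ x in s..t, w x), ∫ x in s..(σ τ), w x = τ) ∧
      (∀ τ ∈ Icc 0 (∫ x in s..t, w x), ∀ r, s ≤ r → (σ τ ≤ r ↔ τ ≤ ∫ x in s..r, w x)) ∧
      Measure.map σ (volume.restrict (Icc 0 (∫ x in s..t, w x))) =
        (volume.restrict (Icc s t)).withDensity (fun r => ENNReal.ofReal (w r)) := by
  set T : ℝ → ℝ := fun r => ∫ x in s..r, w x with hT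
  have hTm : Monotone T := by
    intro x y hxy
    have h := intervalIntegral.integral_add_adjacent_intervals
      (hw.intervalIntegrable (a := s) (b := x)) (hw.intervalIntegrable (a := x) (b := y))
    have h2 : 0 ≤ ∫ z in x..y, w z := intervalIntegral.integral_nonneg hxy fun z _ => hw0 z
    simp only [hT]; linarith
  have hTc : Continuous T := intervalIntegral.continuous_primitive
    (fun a b => hw.intervalIntegrable) s
  have hTs : T s = 0 := by simp [hT]
  have hL0 : 0 ≤ T t := hTs ▸ hTm hst
  -- truncating `τ` at `T t` keeps the set nonempty, so that `σ` is monotone on all of `ℝ`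
  set S : ℝ → Set ℝ := fun τ => {r | r ∈ Icc s t ∧ min τ (T t) ≤ T r} with hS
  have hSne : ∀ τ, (S τ).Nonempty := fun τ => ⟨t, ⟨hst, le_rfl⟩, min_le_right _ _⟩
  have hSbd : ∀ τ, BddBelow (S τ) := fun τ => ⟨s, fun r hr => hr.1.1⟩
  have hScl : ∀ τ, IsClosed (S τ) := fun τ =>
    isClosed_Icc.inter (isClosed_le continuous_const hTc)
  have hmem : ∀ τ, sInf (S τ) ∈ S τ := fun τ => (hScl τ).csInf_mem (hSne τ) (hSbd τ)
  have hmono : Monotone fun τ => sInf (S τ) := fun x y hxy =>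
    csInf_le_csInf (hSbd x) (hSne y) fun r hr =>
      ⟨hr.1, (min_le_min_right _ hxy).trans hr.2⟩
  have hgal : ∀ τ ∈ Icc 0 (T t), ∀ r, s ≤ r → (sInf (S τ) ≤ r ↔ τ ≤ T r) := by
    intro τ hτ r hr
    constructor
    · intro h
      have := (hmem τ).2
      rw [min_eq_left hτ.2] at this
      exact this.trans (hTm h)
    · intro h
      rcases le_total r t with hrt | hrt
      · exact csInf_le (hSbd τ) ⟨⟨hr, hrt⟩, (min_le_left _ _).trans h⟩
      · exact (hmem τ).1.2.trans hrt
  have h0 : sInf (S 0) = s :=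
    le_antisymm ((hgal 0 ⟨le_rfl, hL0⟩ s le_rfl).2 hTs.ge) (hmem 0).1.1
  refine ⟨fun τ => sInf (S τ), hmono, fun τ => (hmem τ).1, h0, ?_, hgal, ?_⟩
  · intro τ hτ
    obtain ⟨r, hr, hrτ⟩ := intermediate_value_Icc hst hTc.continuousOn (by rwa [hTs])
    have h1 := (hmem τ).2
    rw [min_eq_left hτ.2] at h1
    have h2 : T (sInf (S τ)) ≤ T r := hTm ((hgal τ hτ r hr.1).2 hrτ.ge)
    exact le_antisymm (h2.trans hrτ.le) h1
  · have hfin : IsFiniteMeasure (volume.restrict (Icc 0 (T t))) := ⟨by simp⟩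
    have := Measure.isFiniteMeasure_map (volume.restrict (Icc 0 (T t))) (fun τ => sInf (S τ))
    refine Measure.ext_of_Iic _ _ fun a => ?_
    rw [Measure.map_apply hmono.measurable measurableSet_Iic,
      Measure.restrict_apply (hmono.measurable measurableSet_Iic),
      withDensity_apply _ measurableSet_Iic, Measure.restrict_restrict measurableSet_Iic]
    rcases lt_or_ge a s with ha | ha
    · have e1 : (fun τ => sInf (S τ)) ⁻¹' Iic a ∩ Icc 0 (T t) = ∅ := by
        ext τ
        simp only [mem_inter_iff, mem_preimage, mem_Iic, mem_empty_iff_false, iff_false, not_and]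
        intro h
        exact absurd ((hmem τ).1.1.trans h) (not_le.2 ha)
      have e2 : Iic a ∩ Icc s t = ∅ := by
        ext τ
        simp only [mem_inter_iff, mem_Icc, mem_Iic, mem_empty_iff_false, iff_false, not_and]
        intro h h2
        linarith
      rw [e1, e2]; simp
    · have e1 : (fun τ => sInf (S τ)) ⁻¹' Iic a ∩ Icc 0 (T t) = Icc 0 (T (min a t)) := by
        ext τ
        rw [hTm.map_min]
        simp only [mem_inter_iff, mem_preimage, mem_Iic, mem_Icc, le_min_iff]
        constructor
        · rintro ⟨h, h2⟩
          exact ⟨h2.1, (hgal τ h2 a ha).1 h, h2.2⟩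
        · rintro ⟨h, h2, h3⟩
          exact ⟨(hgal τ ⟨h, h3⟩ a ha).2 h2, h, h3⟩
      have e2 : Iic a ∩ Icc s t = Icc s (min a t) := by
        ext τ
        simp only [mem_inter_iff, mem_Icc, mem_Iic, le_min_iff]
        tauto
      rw [e1, e2, Real.volume_Icc, sub_zero, Measure.restrict_congr_set Ioc_ae_eq_Icc.symm,
        ← ofReal_integral_eq_lintegral_ofReal hw.integrableOn (ae_of_all _ hw0),
        ← intervalIntegral.integral_of_le (le_min ha hst)]

/-! ### Reparametrization with prescribed speed -/

/-- Chain rule for metric derivatives under a time change `σ`, a right inverse of `T`: where `u` has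
metric derivative `v` and `T` has derivative `v / k > 0`, the curve `u ∘ σ` has metric
derivative `k`. -/
theorem tendsto_quotient_of_timeChange {X : Type*} [MetricSpace X] {u : ℝ → X} {T σ : ℝ → ℝ}
    {s t L τ v k : ℝ} (hτ : τ ∈ Icc 0 L) (hσ : ∀ τ, σ τ ∈ Icc s t)
    (hTσ : ∀ τ ∈ Icc 0 L, T (σ τ) = τ)
    (hgal : ∀ τ ∈ Icc 0 L, ∀ r, s ≤ r → (σ τ ≤ r ↔ τ ≤ T r))
    (hu : Tendsto (fun r => dist (u r) (u (σ τ)) / |r - σ τ|) (𝓝[Icc s t \ {σ τ}] (σ τ)) (𝓝 v))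
    (hT : HasDerivAt T (v / k) (σ τ)) (hvk : 0 < v / k) :
    Tendsto (fun τ' => dist (u (σ τ')) (u (σ τ)) / |τ' - τ|) (𝓝[Icc 0 L \ {τ}] τ) (𝓝 k) := by
  have hk : k ≠ 0 := by rintro rfl; simp at hvk
  have hv : v ≠ 0 := by rintro rfl; simp at hvk
  have hslope := hasDerivAt_iff_tendsto_slope.1 hT
  have hinI : ∀ᶠ τ' in 𝓝[Icc 0 L \ {τ}] τ, τ' ∈ Icc 0 L \ {τ} := self_mem_nhdsWithin
  have hcont : Tendsto σ (𝓝[Icc 0 L \ {τ}] τ) (𝓝 (σ τ)) := by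
    refine tendsto_order.2 ⟨fun c hc => ?_, fun c hc => ?_⟩
    · rcases lt_or_ge c s with hcs | hcs
      · exact Eventually.of_forall fun τ' => hcs.trans_le (hσ τ').1
      · have h1 : T c < τ := by
          rw [← not_le, ← hgal τ hτ c hcs, not_le]; exact hc
        filter_upwards [hinI, mem_nhdsWithin_of_mem_nhds (Ioi_mem_nhds h1)] with τ' h2 h3
        rw [← not_le, hgal τ' h2.1 c hcs, not_le]; exact h3
    · -- the positive derivative makes `T` exceed `τ` immediately to the right of `σ τ`
      have h1 : ∀ᶠ r in 𝓝[>] (σ τ), 0 < _root_.slope T (σ τ) r :=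
        (hslope.mono_left (nhdsWithin_mono _ fun x hx => (ne_of_gt hx))).eventually
          (lt_mem_nhds hvk)
      obtain ⟨r, hr, hr2⟩ := (h1.and (Ioo_mem_nhdsGT hc)).exists
      have h2 : τ < T r := by
        rw [slope_def_field, hTσ τ hτ, div_pos_iff_of_pos_right (sub_pos.2 hr2.1)] at hr
        linarith
      filter_upwards [hinI, mem_nhdsWithin_of_mem_nhds (Iio_mem_nhds h2)] with τ' h3 h4
      exact ((hgal τ' h3.1 r ((hσ τ).1.trans hr2.1.le)).2 (le_of_lt h4)).trans_lt hr2.2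
  have hne : ∀ᶠ τ' in 𝓝[Icc 0 L \ {τ}] τ, σ τ' ∈ Icc s t \ {σ τ} := by
    filter_upwards [hinI] with τ' h
    refine ⟨hσ τ', fun h2 => h.2 ?_⟩
    have h3 : σ τ' = σ τ := h2
    have := hTσ τ' h.1
    rw [h3, hTσ τ hτ] at this
    exact this.symm
  have h1 := hu.comp (tendsto_nhdsWithin_iff.2 ⟨hcont, hne⟩)
  have h2 := hslope.comp (tendsto_nhdsWithin_iff.2 ⟨hcont, hne.mono fun x hx => hx.2⟩)
  have h3 := h1.div h2.abs (by rw [abs_of_pos hvk]; exact hvk.ne')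
  rw [abs_of_pos hvk, div_div_cancel₀ hv] at h3
  refine h3.congr' ?_
  filter_upwards [hinI, hne] with τ' h4 h5
  have h6 : |σ τ' - σ τ| ≠ 0 := abs_ne_zero.2 (sub_ne_zero.2 h5.2)
  simp only [Pi.div_apply, Function.comp, slope_def_field, hTσ τ hτ, hTσ τ' h4.1, abs_div]
  rw [div_div_div_cancel_right₀ h6]

/-- An absolutely continuous curve can be reparametrized to have a prescribed speed `k`, as long as
`k` vanishes only where the original speed `m` does (up to null sets). The new time is
`T r = ∫_s^r m / k`, finite by `hw`, and integrals in the new time are integrals against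
`(m / k) dr`. In particular `∫ k² dτ = ∫ k m dr`, so `hkI` places the new curve in `AC²`. -/
theorem exists_reparametrization {X : Type*} [MetricSpace X] {u : ℝ → X} {m k : ℝ → ℝ} {s t : ℝ}
    (hst : s ≤ t) (hu : IsMetricDerivOn u m (Icc s t)) (hk0 : ∀ r, 0 ≤ k r)
    (hkm : AEMeasurable k (volume.restrict (Icc s t)))
    (hk : ∀ᵐ r ∂(volume.restrict (Icc s t)), k r = 0 → m r = 0)
    (hw : IntegrableOn (fun r => m r / k r) (Icc s t) volume)
    (hkI : IntegrableOn (fun r => k r * m r) (Icc s t) volume) :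
    ∃ L, 0 ≤ L ∧ ∃ σ : ℝ → ℝ, Measurable σ ∧ u (σ 0) = u s ∧ u (σ L) = u t ∧
      Measure.map σ (volume.restrict (Icc 0 L)) =
        (volume.restrict (Icc s t)).withDensity (fun r => ENNReal.ofReal (m r / k r)) ∧
      (∀ F : ℝ → ℝ≥0∞, AEMeasurable F (volume.restrict (Icc s t)) →
        ∫⁻ τ in Icc 0 L, F (σ τ) = ∫⁻ r in Icc s t, ENNReal.ofReal (m r / k r) * F r) ∧
      AC2On (u ∘ σ) (k ∘ σ) (Icc 0 L) := by
  have hmI : IntegrableOn m (Icc s t) volume := hu.locInt s ⟨le_rfl, hst⟩ t ⟨hst, le_rfl⟩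
  set w : ℝ → ℝ := (Icc s t).indicator fun r => m r / k r with hwdef
  have hwI : Integrable w volume := hw.integrable_indicator measurableSet_Icc
  have hw0 : ∀ r, 0 ≤ w r := fun r =>
    indicator_nonneg (fun r _ => div_nonneg (hu.nonneg r) (hk0 r)) r
  have hweq : ∀ r ∈ Icc s t, w r = m r / k r := fun r hr => indicator_of_mem hr _
  obtain ⟨σ, hσm, hσ, hσ0, hTσ, hgal, hmap⟩ := exists_timeChange hwI hw0 hst
  set T : ℝ → ℝ := fun r => ∫ x in s..r, w x with hTdef
  set L : ℝ := T t with hL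
  have hL0 : 0 ≤ L := intervalIntegral.integral_nonneg hst fun r _ => hw0 r
  have hmap' : Measure.map σ (volume.restrict (Icc 0 L)) =
      (volume.restrict (Icc s t)).withDensity (fun r => ENNReal.ofReal (m r / k r)) := by
    rw [hmap]
    refine withDensity_congr_ae ?_
    filter_upwards [ae_restrict_mem measurableSet_Icc] with r hr
    rw [hweq r hr]
  have hwm : AEMeasurable (fun r => ENNReal.ofReal (m r / k r)) (volume.restrict (Icc s t)) :=
    hw.aemeasurable.ennreal_ofReal
  have hac : Measure.map σ (volume.restrict (Icc 0 L)) ≪ volume.restrict (Icc s t) := by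
    rw [hmap']; exact withDensity_absolutelyContinuous _ _
  have hcv : ∀ F : ℝ → ℝ≥0∞, AEMeasurable F (volume.restrict (Icc s t)) →
      ∫⁻ τ in Icc 0 L, F (σ τ) = ∫⁻ r in Icc s t, ENNReal.ofReal (m r / k r) * F r := by
    intro F hF
    rw [← lintegral_map' (hF.mono_ac hac) hσm.measurable.aemeasurable, hmap',
      lintegral_withDensity_eq_lintegral_mul₀ hwm hF]
    rfl
  have hkσ : AEMeasurable (k ∘ σ) (volume.restrict (Icc 0 L)) :=
    (hkm.mono_ac hac).comp_measurable hσm.measurable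
  have hkσ0 : ∀ τ, 0 ≤ (k ∘ σ) τ := fun τ => hk0 _
  have hmk : ∀ᵐ r ∂(volume.restrict (Icc s t)),
      ENNReal.ofReal (m r / k r) * ENNReal.ofReal (k r) = ENNReal.ofReal (m r) := by
    filter_upwards [hk] with r hr
    rw [← ENNReal.ofReal_mul (div_nonneg (hu.nonneg r) (hk0 r)), div_mul_cancel_of_imp hr]
  have hkint : IntegrableOn (k ∘ σ) (Icc 0 L) volume := by
    refine ⟨hkσ.aestronglyMeasurable, ?_⟩
    rw [hasFiniteIntegral_iff_ofReal (ae_of_all _ hkσ0)]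
    simp only [Function.comp]
    rw [hcv _ hkm.ennreal_ofReal, lintegral_congr_ae hmk]
    exact (hasFiniteIntegral_iff_ofReal (ae_of_all _ hu.nonneg)).1 hmI.2
  have hdist : ∀ τ₁ ∈ Icc 0 L, ∀ τ₂ ∈ Icc 0 L, τ₁ ≤ τ₂ →
      ∫ r in Icc (σ τ₁) (σ τ₂), m r = ∫ τ in Icc τ₁ τ₂, (k ∘ σ) τ := by
    intro τ₁ h₁ τ₂ h₂ h12
    have hsub : Ioc (σ τ₁) (σ τ₂) ⊆ Icc s t := fun r hr =>
      ⟨(hσ τ₁).1.trans hr.1.le, hr.2.trans (hσ τ₂).2⟩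
    have hsub' : Ioc τ₁ τ₂ ⊆ Icc 0 L := fun r hr =>
      ⟨h₁.1.trans hr.1.le, hr.2.trans h₂.2⟩
    have key := hcv ((Ioc (σ τ₁) (σ τ₂)).indicator fun r => ENNReal.ofReal (k r))
      (hkm.ennreal_ofReal.indicator measurableSet_Ioc)
    have eL : ∫⁻ τ in Icc 0 L, (Ioc (σ τ₁) (σ τ₂)).indicator (fun r => ENNReal.ofReal (k r)) (σ τ)
        = ∫⁻ τ in Ioc τ₁ τ₂, ENNReal.ofReal ((k ∘ σ) τ) := by
      rw [← inter_eq_left.2 hsub', ← setLIntegral_indicator measurableSet_Ioc]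
      refine setLIntegral_congr_fun measurableSet_Icc fun τ hτ => ?_
      have e1 : σ τ₁ < σ τ ↔ τ₁ < τ := by
        rw [← not_le, hgal τ hτ _ (hσ τ₁).1, hTσ τ₁ h₁, not_le]
      have e2 : σ τ ≤ σ τ₂ ↔ τ ≤ τ₂ := by
        rw [hgal τ hτ _ (hσ τ₂).1, hTσ τ₂ h₂]
      simp only [indicator, mem_Ioc, e1, e2, Function.comp]
    have eR : ∫⁻ r in Icc s t, ENNReal.ofReal (m r / k r) *
          (Ioc (σ τ₁) (σ τ₂)).indicator (fun r => ENNReal.ofReal (k r)) r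
        = ∫⁻ r in Ioc (σ τ₁) (σ τ₂), ENNReal.ofReal (m r) := by
      rw [← inter_eq_left.2 hsub, ← setLIntegral_indicator measurableSet_Ioc, inter_eq_left.2 hsub]
      refine lintegral_congr_ae ?_
      filter_upwards [hmk] with r hr
      by_cases h : r ∈ Ioc (σ τ₁) (σ τ₂)
      · rw [indicator_of_mem h, indicator_of_mem h, hr]
      · rw [indicator_of_notMem h, indicator_of_notMem h, mul_zero]
    rw [eL, eR] at key
    rw [integral_Icc_eq_integral_Ioc, integral_Icc_eq_integral_Ioc,
      integral_eq_lintegral_of_nonneg_ae (ae_of_all _ hu.nonneg) (hmI.mono_set hsub).1,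
      integral_eq_lintegral_of_nonneg_ae (ae_of_all _ hkσ0) (hkint.mono_set hsub').1,
      key]
  refine ⟨L, hL0, σ, hσm.measurable, by rw [hσ0], ?_, hmap', hcv, ⟨hkσ0, ?_, ?_, ?_⟩, ?_⟩
  · -- past `σ L` the time change is flat, so the speed vanishes there
    have hLm : L ∈ Icc 0 L := ⟨hL0, le_rfl⟩
    have h1 : ∫ x in (σ L)..t, w x = 0 := by
      have h := intervalIntegral.integral_add_adjacent_intervals
        (hwI.intervalIntegrable (a := s) (b := σ L)) (hwI.intervalIntegrable (a := σ L) (b := t))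
      have h2 := hTσ L hLm
      have h3 : ∫ x in s..t, w x = L := rfl
      linarith
    rw [intervalIntegral.integral_of_le (hσ L).2,
      integral_eq_zero_iff_of_nonneg hw0 hwI.integrableOn] at h1
    have hsub : Ioc (σ L) t ⊆ Icc s t := fun r hr => ⟨(hσ L).1.trans hr.1.le, hr.2⟩
    have h2 : ∫ r in Icc (σ L) t, m r = 0 := by
      rw [integral_Icc_eq_integral_Ioc]
      refine integral_eq_zero_of_ae ?_
      filter_upwards [h1, ae_restrict_mem measurableSet_Ioc,
        ae_restrict_of_ae_restrict_of_subset hsub hk] with r h3 h4 h5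
      rw [hweq r (hsub h4)] at h3
      rcases div_eq_zero_iff.1 h3 with h6 | h6
      · exact h6
      · exact h5 h6
    have h3 := hu.dist_le _ (hσ L) t ⟨hst, le_rfl⟩ (hσ L).2
    rw [h2] at h3
    exact dist_le_zero.1 h3
  · intro τ₁ h₁ τ₂ h₂
    exact hkint.mono_set (Icc_subset_Icc h₁.1 h₂.2)
  · intro τ₁ h₁ τ₂ h₂ h12
    rw [← hdist τ₁ h₁ τ₂ h₂ h12]
    exact hu.dist_le _ (hσ _) _ (hσ _) (hσm h12)
  · have hgood : ∀ᵐ r ∂(Measure.map σ (volume.restrict (Icc 0 L))), 0 < m r / k r ∧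
        HasDerivAt T (m r / k r) r ∧
        Tendsto (fun r' => dist (u r') (u r) / |r' - r|) (𝓝[Icc s t \ {r}] r) (𝓝 (m r)) := by
      rw [hmap', ae_withDensity_iff' hwm]
      filter_upwards [hu.limit, ae_restrict_mem measurableSet_Icc,
        ae_restrict_of_ae (LocallyIntegrable.ae_hasDerivAt_integral hwI.locallyIntegrable)] with r h1 h2 h3 h4
      refine ⟨ENNReal.ofReal_pos.1 (pos_iff_ne_zero.2 h4), ?_, h1⟩
      rw [← hweq r h2]
      exact h3 s
    filter_upwards [ae_of_ae_map hσm.measurable.aemeasurable hgood,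
      ae_restrict_mem measurableSet_Icc] with τ h1 hτ
    exact tendsto_quotient_of_timeChange (u := u) (σ := σ) hτ hσ hTσ hgal h1.2.2 h1.2.1 h1.1
  · refine ⟨(hkσ.pow_const 2).aestronglyMeasurable, ?_⟩
    rw [hasFiniteIntegral_iff_ofReal (ae_of_all _ fun τ => sq_nonneg _)]
    simp only [Function.comp]
    rw [hcv _ (hkm.pow_const 2).ennreal_ofReal]
    refine lt_of_eq_of_lt (lintegral_congr_ae ?_)
      ((hasFiniteIntegral_iff_ofReal (ae_of_all _ fun r => mul_nonneg (hk0 r) (hu.nonneg r))).1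
        hkI.2)
    filter_upwards [hk] with r hr
    rw [← ENNReal.ofReal_mul (div_nonneg (hu.nonneg r) (hk0 r)), pow_two, ← mul_assoc,
      div_mul_cancel_of_imp hr, mul_comm]

/-! ### Curves and extended reals -/

theorem IsMetricDerivOn.mono {X : Type*} [MetricSpace X] {u : ℝ → X} {m : ℝ → ℝ} {I J : Set ℝ}
    (hu : IsMetricDerivOn u m I) (hJ : J ⊆ I) : IsMetricDerivOn u m J where
  nonneg := hu.nonneg
  locInt s hs t ht := hu.locInt s (hJ hs) t (hJ ht)
  dist_le s hs t ht := hu.dist_le s (hJ hs) t (hJ ht)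
  limit := by
    filter_upwards [ae_restrict_of_ae_restrict_of_subset hJ hu.limit] with t ht
    exact ht.mono_left (nhdsWithin_mono _ (sdiff_subset_sdiff_left hJ))

theorem IsMetricDerivOn.continuousOn {X : Type*} [MetricSpace X] {u : ℝ → X} {m : ℝ → ℝ}
    {s t : ℝ} (hst : s ≤ t) (hu : IsMetricDerivOn u m (Icc s t)) : ContinuousOn u (Icc s t) := by
  have hmI : IntegrableOn m (Icc s t) volume := hu.locInt s ⟨le_rfl, hst⟩ t ⟨hst, le_rfl⟩
  set M : ℝ → ℝ := fun r => ∫ x in Icc s r, m x with hM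
  have hMc : ContinuousOn M (Icc s t) :=
    intervalIntegral.continuousOn_primitive_Icc hmI
  have hdist : ∀ x ∈ Icc s t, ∀ y ∈ Icc s t, x ≤ y → dist (u x) (u y) ≤ M y - M x := by
    intro x hx y hy hxy
    refine (hu.dist_le x hx y hy hxy).trans_eq ?_
    have h1 : IntegrableOn m (Ioc s x) volume :=
      hmI.mono_set fun z hz => ⟨hz.1.le, hz.2.trans hx.2⟩
    have h2 : IntegrableOn m (Ioc x y) volume :=
      hmI.mono_set fun z hz => ⟨hx.1.trans hz.1.le, hz.2.trans hy.2⟩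
    have h := setIntegral_union (Ioc_disjoint_Ioc_of_le (a := s) (d := y) (le_refl x))
      measurableSet_Ioc h1 h2
    rw [Ioc_union_Ioc_eq_Ioc hx.1 hxy] at h
    simp only [hM, integral_Icc_eq_integral_Ioc]
    linarith
  intro x hx
  rw [ContinuousWithinAt, tendsto_iff_dist_tendsto_zero]
  have h0 : Tendsto (fun y => dist (M y) (M x)) (𝓝[Icc s t] x) (𝓝 0) :=
    tendsto_iff_dist_tendsto_zero.1 (hMc x hx)
  refine squeeze_zero' (Eventually.of_forall fun _ => dist_nonneg) ?_ h0
  filter_upwards [self_mem_nhdsWithin] with y hy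
  rcases le_total x y with h | h
  · rw [dist_comm]
    exact (hdist x hx y hy h).trans ((le_abs_self _).trans_eq (Real.dist_eq _ _).symm)
  · rw [dist_comm (M y)]
    exact (hdist y hy x hx h).trans ((le_abs_self _).trans_eq (Real.dist_eq _ _).symm)

theorem measurable_eabs : Measurable eabs := by
  have h : Measurable epos :=
    Measurable.ite (measurableSet_singleton ⊤) measurable_const
      measurable_ereal_toReal.ennreal_ofReal
  exact h.sup (h.comp measurable_neg)

/-- Letting the perturbation size `δ` tend to `0`. Since `A` is finite, addition of `EReal` is
continuous at `(y, A)` even for infinite `y`. -/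
theorem le_add_of_forall_perturbed {x y : EReal} {A C : ℝ≥0∞} (hA : A ≠ ⊤) (hC : C ≠ ⊤)
    (h : ∀ δ : ℝ≥0∞, 0 < δ → δ < ⊤ → x ≤ y + ((A + δ * C : ℝ≥0∞) : EReal)) :
    x ≤ y + (A : EReal) := by
  have h1 : Tendsto (fun δ : ℝ≥0∞ => A + δ * C) (𝓝[>] 0) (𝓝 A) := by
    have h2 : Tendsto (fun δ : ℝ≥0∞ => δ * C) (𝓝 0) (𝓝 (0 * C)) :=
      ENNReal.Tendsto.mul_const tendsto_id (Or.inr hC)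
    have h3 := (tendsto_const_nhds (x := A)).add h2
    rw [zero_mul, add_zero] at h3
    exact h3.mono_left nhdsWithin_le_nhds
  have h2 : Tendsto (fun δ : ℝ≥0∞ => y + ((A + δ * C : ℝ≥0∞) : EReal)) (𝓝[>] 0)
      (𝓝 (y + (A : EReal))) := by
    have hc : ContinuousAt (fun q : EReal × EReal => q.1 + q.2) (y, (A : EReal)) :=
      EReal.continuousAt_add (Or.inr (EReal.coe_ennreal_ne_bot A))
        (Or.inr (by simpa using hA))
    exact hc.tendsto.comp (tendsto_const_nhds.prodMk_nhds
      ((continuous_coe_ennreal_ereal.tendsto A).comp h1))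
  refine ge_of_tendsto h2 ?_
  filter_upwards [self_mem_nhdsWithin,
    mem_nhdsWithin_of_mem_nhds (Iio_mem_nhds ENNReal.zero_lt_top)] with δ h3 h4
  exact h δ h3 h4

/-! ### The upper gradient inequality -/

/-- The energy estimate along the reparametrization of `u` whose speed is
`h = g ∘ u + δ (1 + ψ)`. The weight `ψ` is chosen so that `φ` along the new curve is as integrable
as the criterion requires; this is the hypothesis `hmem`, where `W = |u'| / h` is the density of
the time change. -/
theorem perturbed_estimate {X : Type*} [MetricSpace X]
    {φ : X → EReal} {q : ℝ≥0∞} {g : X → ℝ≥0∞}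
    (hcrit : ∀ a b : ℝ, a ≤ b → ∀ (ϑ : ℝ → X) (m : ℝ → ℝ), AC2On ϑ m (Icc a b) →
      MemLpENN (fun t => eabs (φ (ϑ t))) q (volume.restrict (Icc a b)) →
      (φ (ϑ b) ≤ φ (ϑ a) +
          (((2 : ℝ≥0∞)⁻¹ *
            ∫⁻ t in Icc a b, (ENNReal.ofReal (m t ^ 2) + g (ϑ t) ^ 2) : ℝ≥0∞) : EReal) ∧
       φ (ϑ a) ≤ φ (ϑ b) +
          (((2 : ℝ≥0∞)⁻¹ *
            ∫⁻ t in Icc a b, (ENNReal.ofReal (m t ^ 2) + g (ϑ t) ^ 2) : ℝ≥0∞) : EReal)))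
    {u : ℝ → X} {m : ℝ → ℝ} {s t : ℝ} (hst : s ≤ t) (hu : IsMetricDerivOn u m (Icc s t))
    {ψ : ℝ → ℝ≥0∞} (hψm : AEMeasurable ψ (volume.restrict (Icc s t)))
    (hgm : AEMeasurable (fun r => g (u r)) (volume.restrict (Icc s t)))
    (hψ : (∫⁻ r in Icc s t, (1 + ψ r) * ENNReal.ofReal (m r)) < ⊤)
    (hg : (∫⁻ r in Icc s t, g (u r) * ENNReal.ofReal (m r)) < ⊤)
    (hmem : ∀ (L : ℝ) (σ : ℝ → ℝ) (W : ℝ → ℝ≥0∞) (c : ℝ≥0∞), Measurable σ → c ≠ ⊤ →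
      AEMeasurable W (volume.restrict (Icc s t)) →
      Measure.map σ (volume.restrict (Icc 0 L)) = (volume.restrict (Icc s t)).withDensity W →
      (∀ F : ℝ → ℝ≥0∞, AEMeasurable F (volume.restrict (Icc s t)) →
        ∫⁻ τ in Icc 0 L, F (σ τ) = ∫⁻ r in Icc s t, W r * F r) →
      (∀ r, W r * (1 + ψ r) ≤ c * ENNReal.ofReal (m r)) →
      MemLpENN (fun τ => eabs (φ (u (σ τ)))) q (volume.restrict (Icc 0 L)))
    {δ : ℝ≥0∞} (hδ0 : 0 < δ) (hδ : δ < ⊤) :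
    φ (u t) ≤ φ (u s) + (((∫⁻ r in Icc s t, g (u r) * ENNReal.ofReal (m r)) +
        δ * ∫⁻ r in Icc s t, (1 + ψ r) * ENNReal.ofReal (m r) : ℝ≥0∞) : EReal) ∧
    φ (u s) ≤ φ (u t) + (((∫⁻ r in Icc s t, g (u r) * ENNReal.ofReal (m r)) +
        δ * ∫⁻ r in Icc s t, (1 + ψ r) * ENNReal.ofReal (m r) : ℝ≥0∞) : EReal) := by
  have hmI : IntegrableOn m (Icc s t) volume := hu.locInt s ⟨le_rfl, hst⟩ t ⟨hst, le_rfl⟩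
  have hMm : AEMeasurable (fun r => ENNReal.ofReal (m r)) (volume.restrict (Icc s t)) :=
    hmI.aemeasurable.ennreal_ofReal
  set h : ℝ → ℝ≥0∞ := fun r => g (u r) + δ * (1 + ψ r) with hh
  have hhm : AEMeasurable h (volume.restrict (Icc s t)) :=
    hgm.add ((hψm.const_add 1).const_mul δ)
  have hsum : ∫⁻ r in Icc s t, h r * ENNReal.ofReal (m r) =
      (∫⁻ r in Icc s t, g (u r) * ENNReal.ofReal (m r)) +
        δ * ∫⁻ r in Icc s t, (1 + ψ r) * ENNReal.ofReal (m r) := by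
    have hgM : AEMeasurable (fun r => g (u r) * ENNReal.ofReal (m r))
        (volume.restrict (Icc s t)) := hgm.mul hMm
    rw [← lintegral_const_mul' δ _ hδ.ne, ← lintegral_add_left' hgM]
    refine lintegral_congr fun r => ?_
    simp only [hh]; ring
  have hfin : ∫⁻ r in Icc s t, h r * ENNReal.ofReal (m r) < ⊤ := by
    rw [hsum]
    exact ENNReal.add_lt_top.2 ⟨hg, ENNReal.mul_lt_top hδ hψ⟩
  have hδh : ∀ r, δ ≤ h r := fun r =>
    (le_mul_of_one_le_right' le_self_add).trans le_add_self
  -- `k r = 0` exactly where `h r = ⊤`; there `m r / k r = 0`, as the density `|u'| / h` should be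
  set k : ℝ → ℝ := fun r => (h r).toReal with hkdef
  have hk0 : ∀ r, 0 ≤ k r := fun r => ENNReal.toReal_nonneg
  have hkm : AEMeasurable k (volume.restrict (Icc s t)) := hhm.ennreal_toReal
  have hktop : ∀ r, k r = 0 → h r = ⊤ := by
    intro r hr
    rcases (ENNReal.toReal_eq_zero_iff _).1 hr with h1 | h1
    · exact absurd (h1 ▸ hδh r) (not_le.2 hδ0)
    · exact h1
  have hk : ∀ᵐ r ∂(volume.restrict (Icc s t)), k r = 0 → m r = 0 := by
    filter_upwards [ae_lt_top' (hhm.mul hMm) hfin.ne] with r h1 h2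
    by_contra h3
    have h4 : ENNReal.ofReal (m r) ≠ 0 := by
      have := (hu.nonneg r).lt_of_ne' h3
      simpa using this
    simp only [Pi.mul_apply, hktop r h2, ENNReal.top_mul h4] at h1
    exact lt_irrefl _ h1
  have hw : IntegrableOn (fun r => m r / k r) (Icc s t) volume := by
    refine Integrable.mono' (hmI.div_const δ.toReal)
      (hmI.aemeasurable.div hkm).aestronglyMeasurable (ae_of_all _ fun r => ?_)
    rw [Real.norm_of_nonneg (div_nonneg (hu.nonneg r) (hk0 r))]
    have hδr : 0 < δ.toReal := ENNReal.toReal_pos hδ0.ne' hδ.ne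
    by_cases h1 : h r = ⊤
    · simp only [hkdef, h1, ENNReal.toReal_top, _root_.div_zero]
      exact div_nonneg (hu.nonneg r) hδr.le
    · exact div_le_div_of_nonneg_left (hu.nonneg r) hδr (ENNReal.toReal_mono h1 (hδh r))
  have hkI : IntegrableOn (fun r => k r * m r) (Icc s t) volume := by
    refine ⟨(hkm.mul hmI.aemeasurable).aestronglyMeasurable, ?_⟩
    rw [hasFiniteIntegral_iff_ofReal (ae_of_all _ fun r => mul_nonneg (hk0 r) (hu.nonneg r))]
    refine lt_of_le_of_lt (lintegral_mono fun r => ?_) hfin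
    rw [ENNReal.ofReal_mul (hk0 r)]
    gcongr
    exact ENNReal.ofReal_toReal_le
  obtain ⟨L, hL0, σ, hσ, hσ0, hσL, hmap, hcv, hAC⟩ :=
    exists_reparametrization hst hu hk0 hkm hk hw hkI
  have hWh : ∀ r, ENNReal.ofReal (m r / k r) * h r ≤ ENNReal.ofReal (m r) := by
    intro r
    by_cases h1 : h r = ⊤
    · simp [hkdef, h1]
    · have h2 : k r ≠ 0 := fun h3 => h1 (hktop r h3)
      rw [← ENNReal.ofReal_toReal h1, ← ENNReal.ofReal_mul (div_nonneg (hu.nonneg r) (hk0 r)),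
        div_mul_cancel₀ _ h2]
  have hmemL := hmem L σ _ δ⁻¹ hσ (ENNReal.inv_ne_top.2 hδ0.ne') hw.aemeasurable.ennreal_ofReal
    hmap hcv (fun r => by
      calc ENNReal.ofReal (m r / k r) * (1 + ψ r)
          = δ⁻¹ * (ENNReal.ofReal (m r / k r) * (δ * (1 + ψ r))) := by
            rw [mul_left_comm, ← mul_assoc δ⁻¹, ENNReal.inv_mul_cancel hδ0.ne' hδ.ne, one_mul]
        _ ≤ δ⁻¹ * (ENNReal.ofReal (m r / k r) * h r) := by
            gcongr
            exact le_add_self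
        _ ≤ δ⁻¹ * ENNReal.ofReal (m r) := by
            gcongr
            exact hWh r)
  -- both `k ^ 2` and `g ^ 2` are at most `h ^ 2`, and `dτ = (|u'| / h) dr`
  have hcost : (2 : ℝ≥0∞)⁻¹ * ∫⁻ τ in Icc 0 L,
        (ENNReal.ofReal ((k ∘ σ) τ ^ 2) + g ((u ∘ σ) τ) ^ 2) ≤
      (∫⁻ r in Icc s t, g (u r) * ENNReal.ofReal (m r)) +
        δ * ∫⁻ r in Icc s t, (1 + ψ r) * ENNReal.ofReal (m r) := by
    rw [← hsum]
    have e := hcv (fun r => ENNReal.ofReal (k r ^ 2) + g (u r) ^ 2)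
      ((hkm.pow_const 2).ennreal_ofReal.add (hgm.pow_const 2))
    simp only [Function.comp]
    rw [e, mul_comm, ← div_eq_mul_inv]
    refine ENNReal.div_le_of_le_mul' ?_
    rw [← lintegral_const_mul' 2 _ ENNReal.ofNat_ne_top]
    refine lintegral_mono fun r => ?_
    have h1 : ENNReal.ofReal (k r ^ 2) ≤ h r ^ 2 := by
      rw [ENNReal.ofReal_pow (hk0 r)]
      gcongr
      exact ENNReal.ofReal_toReal_le
    have h2 : g (u r) ^ 2 ≤ h r ^ 2 := by
      gcongr
      exact le_self_add
    calc ENNReal.ofReal (m r / k r) * (ENNReal.ofReal (k r ^ 2) + g (u r) ^ 2)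
        ≤ ENNReal.ofReal (m r / k r) * (h r ^ 2 + h r ^ 2) := by gcongr
      _ = 2 * (h r * (ENNReal.ofReal (m r / k r) * h r)) := by ring
      _ ≤ 2 * (h r * ENNReal.ofReal (m r)) := by
          gcongr
          exact hWh r
  have hmain := hcrit 0 L hL0 (u ∘ σ) (k ∘ σ) hAC hmemL
  have hcost' := EReal.coe_ennreal_le_coe_ennreal_iff.2 hcost
  simp only [Function.comp] at hmain hcost'
  rw [hσ0, hσL] at hmain
  exact ⟨hmain.1.trans (add_le_add_right hcost' _), hmain.2.trans (add_le_add_right hcost' _)⟩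

/-- Corollary 2.3, a criterion for upper gradients: if for every curve
`ϑ ∈ AC²([a,b];X)` with `φ∘ϑ ∈ L^{2p}(a,b)` one has
`|φ(ϑ(b)) - φ(ϑ(a))| ≤ (1/2)∫_a^b (|ϑ'|² + g²(ϑ)) dt`, then `g` is an `L^p`-moderated upper
gradient for `φ`. -/
theorem statement6
    {X : Type*} [MetricSpace X] [CompleteSpace X] [MeasurableSpace X] [BorelSpace X]
    (φ : X → EReal) (hφ : LowerSemicontinuous φ)
    (p : ℝ≥0∞) (hp : 1 ≤ p)
    (g : X → ℝ≥0∞) (hgBorel : Measurable g)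
    (hcrit : ∀ a b : ℝ, a ≤ b → ∀ (ϑ : ℝ → X) (m : ℝ → ℝ), AC2On ϑ m (Icc a b) →
      MemLpENN (fun t => eabs (φ (ϑ t))) (2 * p) (volume.restrict (Icc a b)) →
      (φ (ϑ b) ≤ φ (ϑ a) +
          (((2 : ℝ≥0∞)⁻¹ *
            ∫⁻ t in Icc a b, (ENNReal.ofReal (m t ^ 2) + g (ϑ t) ^ 2) : ℝ≥0∞) : EReal) ∧
       φ (ϑ a) ≤ φ (ϑ b) +
          (((2 : ℝ≥0∞)⁻¹ *
            ∫⁻ t in Icc a b, (ENNReal.ofReal (m t ^ 2) + g (ϑ t) ^ 2) : ℝ≥0∞) : EReal))) :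
    IsModeratedUpperGradient φ g p := by
  intro a b hab u m hu hφL hgI s hs t ht hst
  have hsub : Icc s t ⊆ Icc a b := Icc_subset_Icc hs.1 ht.2
  have hu' := hu.mono hsub
  have hmI : IntegrableOn m (Icc s t) volume := hu.locInt s hs t ht
  have hmtop : ∫⁻ r in Icc s t, ENNReal.ofReal (m r) < ⊤ :=
    (hasFiniteIntegral_iff_ofReal (ae_of_all _ hu.nonneg)).1 hmI.2
  have hMm : AEMeasurable (fun r => ENNReal.ofReal (m r)) (volume.restrict (Icc s t)) :=
    hmI.aemeasurable.ennreal_ofReal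
  have hMab : AEMeasurable (fun r => ENNReal.ofReal (m r)) (volume.restrict (Icc a b)) :=
    (hu.locInt a ⟨le_rfl, hab⟩ b ⟨hab, le_rfl⟩).aemeasurable.ennreal_ofReal
  have hum := (hu.continuousOn hab).aemeasurable (μ := volume) measurableSet_Icc
  have hfab : AEMeasurable (fun r => eabs (φ (u r))) (volume.restrict (Icc a b)) :=
    (measurable_eabs.comp hφ.measurable).comp_aemeasurable hum
  have hfm := hfab.mono_measure (Measure.restrict_mono_set volume hsub)
  have hgm : AEMeasurable (fun r => g (u r)) (volume.restrict (Icc s t)) :=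
    (hgBorel.comp_aemeasurable hum).mono_measure (Measure.restrict_mono_set volume hsub)
  have hgI' : ∫⁻ r in Icc s t, g (u r) * ENNReal.ofReal (m r) < ⊤ :=
    (lintegral_mono_set hsub).trans_lt hgI
  -- the weight in the speed is `ψ = 0` if `p = ⊤` and `ψ = |φ ∘ u| ^ p` otherwise
  obtain ⟨C, hC, hCest⟩ : ∃ C : ℝ≥0∞, C ≠ ⊤ ∧ ∀ δ : ℝ≥0∞, 0 < δ → δ < ⊤ →
      φ (u t) ≤ φ (u s) + (((∫⁻ r in Icc s t, g (u r) * ENNReal.ofReal (m r)) + δ * C : ℝ≥0∞) :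
        EReal) ∧
      φ (u s) ≤ φ (u t) + (((∫⁻ r in Icc s t, g (u r) * ENNReal.ofReal (m r)) + δ * C : ℝ≥0∞) :
        EReal) := by
    by_cases hptop : p = ⊤
    · have hψ : ∫⁻ r in Icc s t, (1 + (0 : ℝ≥0∞)) * ENNReal.ofReal (m r) < ⊤ := by
        simpa using hmtop
      refine ⟨_, hψ.ne, fun δ h1 h2 => perturbed_estimate (ψ := fun _ => 0) hcrit hst hu'
        aemeasurable_const hgm hψ hgI' ?_ h1 h2⟩
      intro L σ W c hσ hc hWm hmap hcv hW
      simp only [MemLpENN, hptop, if_true, speedMeasure] at hφL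
      obtain ⟨B, hB, hBle⟩ := hφL
      rw [ae_withDensity_iff' hMab] at hBle
      have h2p : 2 * p = ⊤ := by rw [hptop]; exact ENNReal.mul_top two_ne_zero
      simp only [MemLpENN, h2p, if_true]
      refine ⟨B, hB, ?_⟩
      refine ae_of_ae_map (p := fun r => eabs (φ (u r)) ≤ B) hσ.aemeasurable ?_
      rw [hmap, ae_withDensity_iff' hWm]
      filter_upwards [ae_restrict_of_ae_restrict_of_subset hsub hBle] with r h3 h4
      refine h3 fun h5 => h4 ?_
      have := hW r
      simpa [h5] using this
    · simp only [MemLpENN, hptop, if_false, speedMeasure] at hφL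
      rw [lintegral_withDensity_eq_lintegral_mul₀ hMab (hfab.pow_const _)] at hφL
      have hψI : ∫⁻ r in Icc s t, eabs (φ (u r)) ^ p.toReal * ENNReal.ofReal (m r) < ⊤ := by
        refine lt_of_le_of_lt ?_ hφL
        refine (lintegral_mono_set hsub).trans (lintegral_mono fun r => ?_)
        simp only [Pi.mul_apply]
        rw [mul_comm]
      have hψ : ∫⁻ r in Icc s t, (1 + eabs (φ (u r)) ^ p.toReal) * ENNReal.ofReal (m r) < ⊤ := by
        simp only [add_mul, one_mul]
        rw [lintegral_add_left' hMm]
        exact ENNReal.add_lt_top.2 ⟨hmtop, hψI⟩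
      refine ⟨_, hψ.ne, fun δ h1 h2 => perturbed_estimate
        (ψ := fun r => eabs (φ (u r)) ^ p.toReal) hcrit hst hu'
        (hfm.pow_const _) hgm hψ hgI' ?_ h1 h2⟩
      intro L σ W c hσ hc hWm hmap hcv hW
      have h2p : 2 * p ≠ ⊤ := ENNReal.mul_ne_top ENNReal.ofNat_ne_top hptop
      simp only [MemLpENN, h2p, if_false]
      rw [hcv (fun r => eabs (φ (u r)) ^ (2 * p).toReal) (hfm.pow_const _)]
      have hbd : ∀ r, W r * eabs (φ (u r)) ^ (2 * p).toReal ≤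
          c * (eabs (φ (u r)) ^ p.toReal * ENNReal.ofReal (m r)) := by
        intro r
        have e : eabs (φ (u r)) ^ (2 * p).toReal =
            eabs (φ (u r)) ^ p.toReal * eabs (φ (u r)) ^ p.toReal := by
          rw [ENNReal.toReal_mul, mul_comm, ENNReal.rpow_mul, ENNReal.toReal_ofNat,
            ENNReal.rpow_ofNat, pow_two]
        calc W r * eabs (φ (u r)) ^ (2 * p).toReal
            = eabs (φ (u r)) ^ p.toReal * (W r * eabs (φ (u r)) ^ p.toReal) := by rw [e]; ring
          _ ≤ eabs (φ (u r)) ^ p.toReal * (W r * (1 + eabs (φ (u r)) ^ p.toReal)) := by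
              gcongr
              exact le_add_self
          _ ≤ eabs (φ (u r)) ^ p.toReal * (c * ENNReal.ofReal (m r)) := by
              exact mul_le_mul_right (hW r) _
          _ = c * (eabs (φ (u r)) ^ p.toReal * ENNReal.ofReal (m r)) := by ring
      refine lt_of_le_of_lt (lintegral_mono hbd) ?_
      rw [lintegral_const_mul' _ _ hc]
      exact ENNReal.mul_lt_top hc.lt_top hψI
  have hA := hgI'.ne
  exact ⟨le_add_of_forall_perturbed hA hC fun δ h1 h2 => (hCest δ h1 h2).1,
    le_add_of_forall_perturbed hA hC fun δ h1 h2 => (hCest δ h1 h2).2⟩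

end WED
end
end

section
/- Assume φ satisfies the LSCC property, 1/(16ε) ≥ B, and ū ∈ D(φ). If u is a minimizer of the WED functional I_ε over 𝒜_ū^ε, then the map t ↦ φ(u(t)) − (ε/2)|u'|²(t) belongs to W^{1,1}_loc([0,∞)) and satisfies the metric inner-variation equation d/dt ( φ(u(t)) − (ε/2)|u'|²(t) ) = −|u'|²(t) in the sense of distributions on (0,∞). -/
/-!
The equation is the Euler-Lagrange equation for inner variations, that is, for perturbations of
the time parametrization.

If `e(s) = s + δ ζ(s)` with `ζ(0) = 0` and `δ` small, then `u ∘ e⁻¹` is again admissible, with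
metric derivative `(|u'| / e') ∘ e⁻¹` (`IsTimeChange.admissible`), and substituting `t = e(s)` gives
`I_ε[u ∘ e⁻¹] = ∫₀^∞ ε⁻¹ e^{-e(s)/ε} ((ε/2)|u'|²(s) / e'(s) + φ(u(s)) e'(s)) ds`
(`IsTimeChange.wedFun_eq`). No regularity of `φ` along `u` enters. This expression is minimal at
`δ = 0` and may be differentiated under the integral sign, so that its derivative at `δ = 0`
vanishes (`first_variation`). For `ζ(s) = e^{s/ε} η(s)`, with `η` of class `C¹` and compactly
supported in `(0,∞)`, the exponential weight cancels and what is left is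
`∫ ((φ(u) - (ε/2)|u'|²) η' - |u'|² η) = 0` (`IsMinimizer.inner_variation`), the equation in
the sense of distributions. The du Bois-Reymond lemma `exists_ae_eq_sub_primitive` turns it into
the existence of a locally absolutely continuous representative.

The differentiation requires `φ ∘ u ∈ L¹(μ_ε)` (`IsMinimizer.integrable`). The positive part is
controlled by comparison with the constant curve `ū`, which has finite energy. For the negative
part, coercivity bounds `-φ(u(t))` by `B d²(u(t), ū)` plus a constant, and `d(u(t), ū) ≤ ∫₀^t |u'|`
is in `L²(μ_ε)` by a weighted Hardy inequality (`lintegral_primitive_sq_lt_top`).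
-/

open MeasureTheory Filter Topology Set ENNReal

noncomputable section

namespace WED

/-! ### The exponential measure and extended integrals -/

theorem measurable_expDensity (ε : ℝ) :
    Measurable fun t : ℝ => ENNReal.ofReal (ε⁻¹ * Real.exp (-t / ε)) := by
  fun_prop

theorem expDensity_pos {ε : ℝ} (hε : 0 < ε) (t : ℝ) : 0 < ε⁻¹ * Real.exp (-t / ε) := by
  positivity

theorem integrable_expMeasure_iff {ε : ℝ} (hε : 0 < ε) (g : ℝ → ℝ) :
    Integrable g (expMeasure ε) ↔
      IntegrableOn (fun t => ε⁻¹ * Real.exp (-t / ε) * g t) (Ioi 0) := by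
  unfold expMeasure
  rw [integrable_withDensity_iff_integrable_smul' (measurable_expDensity ε) (by simp)]
  simp only [ENNReal.toReal_ofReal (expDensity_pos hε _).le, smul_eq_mul, IntegrableOn]

theorem integral_expMeasure {ε : ℝ} (hε : 0 < ε) (g : ℝ → ℝ) :
    ∫ t, g t ∂expMeasure ε = ∫ t in Ioi (0:ℝ), ε⁻¹ * Real.exp (-t / ε) * g t := by
  unfold expMeasure
  rw [integral_withDensity_eq_integral_toReal_smul (measurable_expDensity ε) (by simp)]
  simp only [ENNReal.toReal_ofReal (expDensity_pos hε _).le, smul_eq_mul]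

theorem lintegral_expMeasure (ε : ℝ) (g : ℝ → ℝ≥0∞) :
    ∫⁻ t, g t ∂expMeasure ε
      = ∫⁻ t in Ioi (0:ℝ), ENNReal.ofReal (ε⁻¹ * Real.exp (-t / ε)) * g t := by
  unfold expMeasure
  rw [lintegral_withDensity_eq_lintegral_mul_non_measurable _ (measurable_expDensity ε) (by simp)]
  rfl

theorem ae_expMeasure_iff {ε : ℝ} (hε : 0 < ε) (p : ℝ → Prop) :
    (∀ᵐ t ∂expMeasure ε, p t) ↔ ∀ᵐ t ∂(volume.restrict (Ioi (0:ℝ))), p t := by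
  unfold expMeasure
  rw [ae_withDensity_iff (measurable_expDensity ε)]
  have : ∀ t : ℝ, ENNReal.ofReal (ε⁻¹ * Real.exp (-t / ε)) ≠ 0 := fun t => by
    simpa using expDensity_pos hε t
  simp [this]

theorem integrableOn_exp_neg_div {ε : ℝ} (hε : 0 < ε) (c : ℝ) :
    IntegrableOn (fun t : ℝ => Real.exp (-t / ε)) (Ioi c) := by
  have := integrableOn_exp_mul_Ioi (a := -ε⁻¹) (by simpa using hε) c
  refine this.congr_fun (fun t _ => ?_) measurableSet_Ioi
  simp only; congr 1; ring

theorem isFiniteMeasure_expMeasure {ε : ℝ} (hε : 0 < ε) : IsFiniteMeasure (expMeasure ε) := by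
  have h : Integrable (fun _ => (1:ℝ)) (expMeasure ε) := by
    rw [integrable_expMeasure_iff hε]
    simpa [IntegrableOn] using (integrableOn_exp_neg_div hε 0).const_mul ε⁻¹
  exact (integrable_const_iff_isFiniteMeasure one_ne_zero).1 h

theorem epos_coe (x : ℝ) : epos (x : EReal) = ENNReal.ofReal x := by
  simp [epos]

/-- For a function that agrees a.e. with an integrable real function, the extended integral is the
Bochner integral. -/
theorem eIntegral_eq_integral {μ : Measure ℝ} {f : ℝ → EReal} {g : ℝ → ℝ}
    (hfg : ∀ᵐ t ∂μ, f t = (g t : EReal)) (hg : Integrable g μ) :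
    eIntegral μ f = ((∫ t, g t ∂μ : ℝ) : EReal) := by
  have h1 : ∫⁻ t, epos (f t) ∂μ = ∫⁻ t, ENNReal.ofReal (g t) ∂μ :=
    lintegral_congr_ae (hfg.mono fun t ht => by simp only [ht, epos_coe])
  have h2 : ∫⁻ t, epos (-f t) ∂μ = ∫⁻ t, ENNReal.ofReal (-g t) ∂μ :=
    lintegral_congr_ae (hfg.mono fun t ht => by
      simp only [ht]; rw [← EReal.coe_neg, epos_coe])
  have f1 : ∫⁻ t, ENNReal.ofReal (g t) ∂μ ≠ ⊤ := hg.lintegral_lt_top.ne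
  have f2 : ∫⁻ t, ENNReal.ofReal (-g t) ∂μ ≠ ⊤ := hg.neg.lintegral_lt_top.ne
  rw [eIntegral, h1, h2, integral_eq_lintegral_pos_part_sub_lintegral_neg_part hg, EReal.coe_sub,
    ← EReal.coe_ennreal_toReal f1, ← EReal.coe_ennreal_toReal f2]


/-! ### A weighted Hardy inequality -/

/-- Hardy inequality in the weighted space: the primitive of a function in `L²(μ_ε)` is again in
`L²(μ_ε)`. -/
theorem lintegral_primitive_sq_lt_top {ε : ℝ} (hε : 0 < ε) {m : ℝ → ℝ} (hm0 : ∀ t, 0 ≤ m t)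
    (hm : ∀ s ∈ Ici (0:ℝ), ∀ t ∈ Ici (0:ℝ), IntegrableOn m (Icc s t))
    (hm2 : (∫⁻ t, ENNReal.ofReal (m t ^ 2) ∂expMeasure ε) < ⊤) :
    (∫⁻ t, ENNReal.ofReal ((∫ r in Icc 0 t, m r) ^ 2) ∂expMeasure ε) < ⊤ := by
  have hmeas : AEMeasurable m (volume.restrict (Ioi (0:ℝ))) := by
    have : Ioi (0:ℝ) ⊆ ⋃ n : ℕ, Icc (0:ℝ) n := fun x hx => by
      obtain ⟨n, hn⟩ := exists_nat_ge x
      exact mem_iUnion.2 ⟨n, le_of_lt hx, hn⟩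
    refine AEMeasurable.mono_measure ?_ (Measure.restrict_mono this le_rfl)
    exact aemeasurable_iUnion_iff.2 fun n =>
      (hm 0 (by simp) n (by simp)).aestronglyMeasurable.aemeasurable
  -- Cauchy-Schwarz with the weight `exp (-s / 2ε)`
  have hCS : ∀ t ∈ Ioi (0:ℝ), ENNReal.ofReal ((∫ r in Icc 0 t, m r) ^ 2) ≤
      (∫⁻ s in Ioi (0:ℝ), (Iic t).indicator
        (fun s => ENNReal.ofReal (m s ^ 2 * Real.exp (-s / (2 * ε)))) s) *
        ENNReal.ofReal (2 * ε * Real.exp (t / (2 * ε))) := by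
    intro t ht
    have hIcc := hm 0 (by simp) t (by simpa using ht.le)
    have hIoc : IntegrableOn m (Ioc 0 t) := hIcc.mono_set Ioc_subset_Icc_self
    rw [integral_Icc_eq_integral_Ioc, ENNReal.ofReal_pow (setIntegral_nonneg measurableSet_Ioc
      fun r _ => hm0 r), ofReal_integral_eq_lintegral_ofReal hIoc (ae_of_all _ hm0)]
    have hm' : AEMeasurable m (volume.restrict (Ioc 0 t)) := hIoc.aestronglyMeasurable.aemeasurable
    have key := ENNReal.lintegral_mul_le_Lp_mul_Lq (volume.restrict (Ioc 0 t))
      Real.HolderConjugate.two_two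
      (f := fun s => ENNReal.ofReal (m s * Real.exp (-s / (4 * ε))))
      (g := fun s => ENNReal.ofReal (Real.exp (s / (4 * ε)))) (by fun_prop) (by fun_prop)
    have e1 : ∀ s, ((fun s => ENNReal.ofReal (m s * Real.exp (-s / (4 * ε)))) *
        fun s => ENNReal.ofReal (Real.exp (s / (4 * ε)))) s = ENNReal.ofReal (m s) := by
      intro s
      rw [Pi.mul_apply, ← ENNReal.ofReal_mul (mul_nonneg (hm0 s) (Real.exp_pos _).le), mul_assoc,
        ← Real.exp_add, neg_div, neg_add_cancel, Real.exp_zero, mul_one]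
    have e2 : ∀ s, ENNReal.ofReal (m s * Real.exp (-s / (4 * ε))) ^ (2:ℝ) =
        ENNReal.ofReal (m s ^ 2 * Real.exp (-s / (2 * ε))) := by
      intro s
      rw [ENNReal.rpow_two, ← ENNReal.ofReal_pow (mul_nonneg (hm0 s) (Real.exp_pos _).le), mul_pow,
        ← Real.exp_nat_mul]
      congr 3; push_cast; field_simp; ring
    have e3 : ∀ s, ENNReal.ofReal (Real.exp (s / (4 * ε))) ^ (2:ℝ) =
        ENNReal.ofReal (Real.exp (s / (2 * ε))) := by
      intro s
      rw [ENNReal.rpow_two, ← ENNReal.ofReal_pow (Real.exp_pos _).le, ← Real.exp_nat_mul]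
      congr 2; push_cast; field_simp; ring
    simp only [e1, e2, e3] at key
    have e4 : ∫⁻ s in Ioc 0 t, ENNReal.ofReal (Real.exp (s / (2 * ε))) ≤
        ENNReal.ofReal (2 * ε * Real.exp (t / (2 * ε))) := by
      calc _ ≤ ∫⁻ s in Iic t, ENNReal.ofReal (Real.exp (s / (2 * ε))) :=
            lintegral_mono_set Ioc_subset_Iic_self
        _ = ∫⁻ s in Iic t, ENNReal.ofReal (Real.exp ((2 * ε)⁻¹ * s)) := by
            simp only [div_eq_inv_mul]
        _ = ENNReal.ofReal (∫ s in Iic t, Real.exp ((2 * ε)⁻¹ * s)) :=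
            (ofReal_integral_eq_lintegral_ofReal (integrableOn_exp_mul_Iic (by positivity) t)
              (ae_of_all _ fun s => (Real.exp_pos _).le)).symm
        _ = _ := by
            rw [integral_exp_mul_Iic (by positivity)]
            congr 1; field_simp
    have e5 : ∫⁻ s in Ioi (0:ℝ), (Iic t).indicator
        (fun s => ENNReal.ofReal (m s ^ 2 * Real.exp (-s / (2 * ε)))) s =
        ∫⁻ s in Ioc 0 t, ENNReal.ofReal (m s ^ 2 * Real.exp (-s / (2 * ε))) := by
      rw [lintegral_indicator measurableSet_Iic, Measure.restrict_restrict measurableSet_Iic,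
        inter_comm, Ioi_inter_Iic]
    rw [e5]
    calc _ ≤ _ := pow_le_pow_left' key 2
      _ ≤ _ := by
        rw [mul_pow, ← ENNReal.rpow_two, ← ENNReal.rpow_mul, ← ENNReal.rpow_two,
          ← ENNReal.rpow_mul]
        norm_num
        gcongr
  rw [lintegral_expMeasure] at hm2 ⊢
  have hk : ∀ s : ℝ, ∫⁻ t in Ioi (0:ℝ), (Ici s).indicator
      (fun t => ENNReal.ofReal (2 * Real.exp (-t / (2 * ε)))) t ≤
      ENNReal.ofReal (4 * ε * Real.exp (-s / (2 * ε))) := by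
    intro s
    calc _ ≤ ∫⁻ t, (Ici s).indicator (fun t => ENNReal.ofReal (2 * Real.exp (-t / (2 * ε)))) t :=
          setLIntegral_le_lintegral _ _
      _ = ∫⁻ t in Ioi s, ENNReal.ofReal (2 * Real.exp (-(2 * ε)⁻¹ * t)) := by
          rw [lintegral_indicator measurableSet_Ici, restrict_Ioi_eq_restrict_Ici]
          refine lintegral_congr fun t => ?_
          congr 3; ring
      _ = ENNReal.ofReal (∫ t in Ioi s, 2 * Real.exp (-(2 * ε)⁻¹ * t)) :=
          (ofReal_integral_eq_lintegral_ofReal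
            ((integrableOn_exp_mul_Ioi (by simpa using hε) s).const_mul 2)
            (ae_of_all _ fun s => by positivity)).symm
      _ = _ := by
          rw [integral_const_mul, integral_exp_mul_Ioi (by simpa using hε)]
          have : -(2 * ε)⁻¹ * s = -s / (2 * ε) := by ring
          rw [this]
          congr 1; field_simp; norm_num
      _ ≤ _ := le_rfl
  calc ∫⁻ t in Ioi (0:ℝ), ENNReal.ofReal (ε⁻¹ * Real.exp (-t / ε)) *
        ENNReal.ofReal ((∫ r in Icc 0 t, m r) ^ 2)
      ≤ ∫⁻ t in Ioi (0:ℝ), ∫⁻ s in Ioi (0:ℝ), ENNReal.ofReal (m s ^ 2 * Real.exp (-s / (2 * ε))) *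
          (Ici s).indicator (fun t => ENNReal.ofReal (2 * Real.exp (-t / (2 * ε)))) t := by
        refine setLIntegral_mono' measurableSet_Ioi fun t ht => ?_
        refine (mul_le_mul_right (hCS t ht) _).trans (le_of_eq ?_)
        rw [mul_comm, mul_assoc, ← ENNReal.ofReal_mul (by positivity),
          ← lintegral_mul_const' _ _ ENNReal.ofReal_ne_top]
        refine lintegral_congr fun s => ?_
        have : 2 * ε * Real.exp (t / (2 * ε)) * (ε⁻¹ * Real.exp (-t / ε)) =
            2 * Real.exp (-t / (2 * ε)) := by
          have : Real.exp (-t / (2 * ε)) = Real.exp (t / (2 * ε)) * Real.exp (-t / ε) := by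
            rw [← Real.exp_add]; congr 1; field_simp; norm_num
          rw [this]; field_simp
        rw [this]
        by_cases hst : s ≤ t <;> simp [indicator, hst]
    _ = ∫⁻ s in Ioi (0:ℝ), ∫⁻ t in Ioi (0:ℝ), ENNReal.ofReal (m s ^ 2 * Real.exp (-s / (2 * ε))) *
          (Ici s).indicator (fun t => ENNReal.ofReal (2 * Real.exp (-t / (2 * ε)))) t := by
        refine lintegral_lintegral_swap ?_
        have h1 : AEMeasurable (fun p : ℝ × ℝ => ENNReal.ofReal
            (m p.2 ^ 2 * Real.exp (-p.2 / (2 * ε))))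
            ((volume.restrict (Ioi (0:ℝ))).prod (volume.restrict (Ioi (0:ℝ)))) :=
          AEMeasurable.comp_snd (f := fun s => ENNReal.ofReal
            (m s ^ 2 * Real.exp (-s / (2 * ε)))) (by fun_prop)
        refine h1.mul (Measurable.aemeasurable ?_)
        have : (fun p : ℝ × ℝ => (Ici p.2).indicator
            (fun t => ENNReal.ofReal (2 * Real.exp (-t / (2 * ε)))) p.1) =
            {p : ℝ × ℝ | p.2 ≤ p.1}.indicator
              (fun p => ENNReal.ofReal (2 * Real.exp (-p.1 / (2 * ε)))) := by
          ext p; simp [indicator]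
        rw [this]
        exact Measurable.indicator (by fun_prop)
          (measurableSet_le measurable_snd measurable_fst)
    _ ≤ ∫⁻ s in Ioi (0:ℝ), ENNReal.ofReal (4 * ε ^ 2) *
          (ENNReal.ofReal (ε⁻¹ * Real.exp (-s / ε)) * ENNReal.ofReal (m s ^ 2)) := by
        refine setLIntegral_mono' measurableSet_Ioi fun s _ => ?_
        rw [lintegral_const_mul' _ _ ENNReal.ofReal_ne_top]
        refine (mul_le_mul_right (hk s) _).trans (le_of_eq ?_)
        rw [← ENNReal.ofReal_mul (by positivity), ← ENNReal.ofReal_mul (by positivity),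
          ← ENNReal.ofReal_mul (by positivity)]
        congr 1
        have : Real.exp (-s / ε) = Real.exp (-s / (2 * ε)) * Real.exp (-s / (2 * ε)) := by
          rw [← Real.exp_add]; congr 1; field_simp; norm_num
        rw [this]; field_simp
    _ < ⊤ := by
        rw [lintegral_const_mul' _ _ ENNReal.ofReal_ne_top]
        exact ENNReal.mul_lt_top ENNReal.ofReal_lt_top hm2

/-! ### Time changes -/

/-- `e` is a `C¹` time change of `ℝ` fixing `0`, with derivative `q` between `1/2` and `2`, at
uniform distance at most `D` from the identity. -/
structure IsTimeChange (e : ℝ ≃o ℝ) (q : ℝ → ℝ) (D : ℝ) : Prop where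
  cont : Continuous q
  deriv : ∀ x, HasDerivAt e (q x) x
  lower : ∀ x, 1 / 2 ≤ q x
  upper : ∀ x, q x ≤ 2
  zero : e 0 = 0
  near : ∀ x, |e x - x| ≤ D

namespace IsTimeChange

variable {e : ℝ ≃o ℝ} {q : ℝ → ℝ} {D : ℝ}

theorem pos (h : IsTimeChange e q D) (x : ℝ) : 0 < q x := by linarith [h.lower x]

theorem integrableOn_image_iff (h : IsTimeChange e q D) {s : Set ℝ} (hs : MeasurableSet s)
    (g : ℝ → ℝ) : IntegrableOn g (e '' s) ↔ IntegrableOn (fun x => q x * g (e x)) s := by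
  rw [integrableOn_image_iff_integrableOn_abs_deriv_smul hs
    (fun x _ => (h.deriv x).hasDerivWithinAt) e.injective.injOn]
  simp only [abs_of_pos (h.pos _), smul_eq_mul]

theorem integral_image (h : IsTimeChange e q D) {s : Set ℝ} (hs : MeasurableSet s)
    (g : ℝ → ℝ) : ∫ x in e '' s, g x = ∫ x in s, q x * g (e x) := by
  rw [integral_image_eq_integral_abs_deriv_smul hs
    (fun x _ => (h.deriv x).hasDerivWithinAt) e.injective.injOn]
  simp only [abs_of_pos (h.pos _), smul_eq_mul]

theorem image_Ioi (h : IsTimeChange e q D) : e '' Ioi 0 = Ioi 0 := by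
  rw [OrderIso.image_Ioi, h.zero]

theorem symm_zero (h : IsTimeChange e q D) : e.symm 0 = 0 := by
  rw [OrderIso.symm_apply_eq, h.zero]

theorem symm_nonneg (h : IsTimeChange e q D) {t : ℝ} (ht : 0 ≤ t) : 0 ≤ e.symm t := by
  rw [← h.symm_zero]; exact e.symm.monotone ht

theorem symm_deriv (h : IsTimeChange e q D) (t : ℝ) :
    HasDerivAt e.symm (q (e.symm t))⁻¹ t :=
  HasDerivAt.of_local_left_inverse e.symm.continuous.continuousAt (h.deriv _) (h.pos _).ne'
    (Eventually.of_forall fun y => e.apply_symm_apply y)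

/-- A property holding a.e. on the half line holds a.e. after the time change. -/
theorem ae_symm (h : IsTimeChange e q D) {p : ℝ → Prop}
    (hp : ∀ᵐ t ∂(volume.restrict (Ioi (0:ℝ))), p t) :
    ∀ᵐ t ∂(volume.restrict (Ioi (0:ℝ))), p (e.symm t) := by
  rw [ae_restrict_iff' measurableSet_Ioi] at hp ⊢
  have h0 : volume (e '' {t | ¬ (t ∈ Ioi (0:ℝ) → p t)}) = 0 :=
    addHaar_image_eq_zero_of_differentiableOn_of_addHaar_eq_zero volume
      (fun x _ => (h.deriv x).differentiableAt.differentiableWithinAt) (ae_iff.1 hp)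
  refine ae_iff.2 (measure_mono_null (fun t ht => ?_) h0)
  refine ⟨e.symm t, fun hcon => ht fun ht0 => hcon ?_, e.apply_symm_apply t⟩
  rw [mem_Ioi, ← h.symm_zero]
  exact e.symm.strictMono ht0

/-- Replacing the weight `e^{-s/ε}` by `e^{-e(s)/ε}` and multiplying by a bounded continuous factor
preserves integrability. -/
theorem integrableOn_weight (h : IsTimeChange e q D) {ε : ℝ} (hε : 0 < ε) {f k : ℝ → ℝ} {C : ℝ}
    (hf : Integrable f (expMeasure ε)) (hk : Continuous k) (hC : ∀ x, |k x| ≤ C) :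
    IntegrableOn (fun s => ε⁻¹ * Real.exp (-e s / ε) * (k s * f s)) (Ioi 0) := by
  rw [integrable_expMeasure_iff hε] at hf
  have key : IntegrableOn (fun s => (k s * Real.exp (-(e s - s) / ε)) *
      (ε⁻¹ * Real.exp (-s / ε) * f s)) (Ioi 0) := by
    have hc := e.continuous
    refine Integrable.bdd_mul (c := C * Real.exp (D / ε)) hf ?_ (ae_of_all _ fun s => ?_)
    · exact Continuous.aestronglyMeasurable (by fun_prop)
    · rw [Real.norm_eq_abs, abs_mul, abs_of_pos (Real.exp_pos _)]
      have h1 := (abs_le.1 (h.near s)).1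
      have : -(e s - s) ≤ D := by linarith
      gcongr
      · exact (abs_nonneg _).trans (hC s)
      · exact hC s
  refine key.congr_fun (fun s _ => ?_) measurableSet_Ioi
  have : Real.exp (-e s / ε) = Real.exp (-(e s - s) / ε) * Real.exp (-s / ε) := by
    rw [← Real.exp_add]; congr 1; ring
  simp only [this]; ring

/-- Admissible curves remain admissible under a time change, the metric derivative transforming by
the chain rule. -/
theorem admissible {X : Type*} [MetricSpace X] (h : IsTimeChange e q D) {ε : ℝ} (hε : 0 < ε)
    {x : X} {u : ℝ → X} {m : ℝ → ℝ}
    (hu : Admissible ε x u m) (hm2 : Integrable (fun t => m t ^ 2) (expMeasure ε)) :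
    Admissible ε x (fun t => u (e.symm t)) (fun t => m (e.symm t) / q (e.symm t)) := by
  obtain ⟨hu0, ⟨hmd, hsq⟩, hfin⟩ := hu
  have hIcc : ∀ s t : ℝ, Icc s t = e '' Icc (e.symm s) (e.symm t) := fun s t => by
    rw [OrderIso.image_Icc, e.apply_symm_apply, e.apply_symm_apply]
  have hqinv : Continuous fun s => (q s)⁻¹ := h.cont.inv₀ fun s => (h.pos s).ne'
  refine ⟨by simp only [h.symm_zero, hu0], ⟨⟨fun t => div_nonneg (hmd.nonneg _) (h.pos _).le,
    fun s hs t ht => ?_, fun s hs t ht hst => ?_, ?_⟩, fun s hs t ht => ?_⟩, ?_⟩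
  · rw [hIcc, h.integrableOn_image_iff measurableSet_Icc]
    refine (hmd.locInt _ (h.symm_nonneg hs) _ (h.symm_nonneg ht)).congr_fun (fun r _ => ?_)
      measurableSet_Icc
    have := (h.pos r).ne'
    simp only [e.symm_apply_apply]; field_simp
  · refine (hmd.dist_le _ (h.symm_nonneg hs) _ (h.symm_nonneg ht) (e.symm.monotone hst)).trans
      (le_of_eq ?_)
    rw [hIcc s t, h.integral_image measurableSet_Icc]
    refine setIntegral_congr_fun measurableSet_Icc fun r _ => ?_
    have := (h.pos r).ne'
    simp only [e.symm_apply_apply]; field_simp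
  · have hl := hmd.limit
    rw [← restrict_Ioi_eq_restrict_Ici] at hl ⊢
    filter_upwards [h.ae_symm hl] with t ht
    have h1 : Tendsto e.symm (𝓝[Ici 0 \ {t}] t) (𝓝[Ici 0 \ {e.symm t}] (e.symm t)) := by
      refine tendsto_nhdsWithin_iff.2 ⟨e.symm.continuous.continuousAt.tendsto.mono_left
        nhdsWithin_le_nhds, ?_⟩
      filter_upwards [self_mem_nhdsWithin] with s hs
      exact ⟨h.symm_nonneg hs.1, fun hst => hs.2 (e.symm.injective hst)⟩
    have h2 : Tendsto (fun s => |e.symm s - e.symm t| / |s - t|) (𝓝[Ici 0 \ {t}] t)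
        (𝓝 (q (e.symm t))⁻¹) := by
      have := (h.symm_deriv t).tendsto_slope.abs
      rw [abs_of_pos (inv_pos.2 (h.pos _))] at this
      refine (this.mono_left (nhdsWithin_mono _ fun s hs => hs.2)).congr fun s => ?_
      rw [slope_def_field, abs_div]
    have h3 := (ht.comp h1).mul h2
    rw [div_eq_mul_inv]
    refine h3.congr' ?_
    filter_upwards [self_mem_nhdsWithin] with s hs
    have hne : |e.symm s - e.symm t| ≠ 0 :=
      abs_ne_zero.2 (sub_ne_zero.2 fun hst => hs.2 (e.symm.injective hst))
    simp only [Function.comp]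
    field_simp
  · rw [hIcc, h.integrableOn_image_iff measurableSet_Icc]
    refine ((hsq _ (h.symm_nonneg hs) _ (h.symm_nonneg ht)).continuousOn_mul
      hqinv.continuousOn isCompact_Icc).congr_fun (fun r _ => ?_) measurableSet_Icc
    have := (h.pos r).ne'
    simp only [e.symm_apply_apply]; field_simp
  · have : Integrable (fun t => (m (e.symm t) / q (e.symm t)) ^ 2) (expMeasure ε) := by
      rw [integrable_expMeasure_iff hε, ← h.image_Ioi, h.integrableOn_image_iff measurableSet_Ioi]
      refine (h.integrableOn_weight hε hm2 hqinv (C := 2) fun s => ?_).congr_fun (fun r _ => ?_)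
        measurableSet_Ioi
      · rw [abs_of_pos (inv_pos.2 (h.pos _))]
        exact inv_le_of_inv_le₀ (by norm_num) (by linarith [h.lower s])
      · have := (h.pos r).ne'
        simp only [e.symm_apply_apply]; field_simp
    exact this.lintegral_lt_top

/-- The WED functional of a time-changed curve, written as an integral in the original time. -/
theorem wedFun_eq {X : Type*} (h : IsTimeChange e q D) {φ : X → EReal} {ε : ℝ} (hε : 0 < ε)
    {u : ℝ → X} {m b : ℝ → ℝ} (hm2 : Integrable (fun t => m t ^ 2) (expMeasure ε))
    (hb : Integrable b (expMeasure ε))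
    (hφ : ∀ᵐ t ∂(volume.restrict (Ioi (0:ℝ))), φ (u t) = (b t : EReal)) :
    WEDfun φ ε (fun t => u (e.symm t)) (fun t => m (e.symm t) / q (e.symm t)) =
      ((∫ s in Ioi (0:ℝ), ε⁻¹ * Real.exp (-e s / ε) *
        (ε / 2 * m s ^ 2 / q s + b s * q s) : ℝ) : EReal) := by
  have hqinv : Continuous fun s => (q s)⁻¹ := h.cont.inv₀ fun s => (h.pos s).ne'
  have key : ∀ s, q s * (ε⁻¹ * Real.exp (-e s / ε) * (ε / 2 * (m (e.symm (e s)) /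
      q (e.symm (e s))) ^ 2 + b (e.symm (e s)))) = ε⁻¹ * Real.exp (-e s / ε) *
        (ε / 2 * m s ^ 2 / q s + b s * q s) := fun s => by
    have := (h.pos s).ne'
    simp only [e.symm_apply_apply]; field_simp
  rw [WEDfun, eIntegral_eq_integral (g := fun t => ε / 2 * (m (e.symm t) / q (e.symm t)) ^ 2 +
    b (e.symm t)), integral_expMeasure hε, ← h.image_Ioi, h.integral_image measurableSet_Ioi]
  · simp only [key, h.image_Ioi]
  · rw [ae_expMeasure_iff hε]
    filter_upwards [h.ae_symm hφ] with t ht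
    rw [wedIntegrand, ht, EReal.coe_add]
  · rw [integrable_expMeasure_iff hε, ← h.image_Ioi, h.integrableOn_image_iff measurableSet_Ioi]
    simp only [key]
    have i1 := h.integrableOn_weight hε (hm2.const_mul (ε / 2)) hqinv (C := 2) fun s => by
      rw [abs_of_pos (inv_pos.2 (h.pos _))]
      exact inv_le_of_inv_le₀ (by norm_num) (by linarith [h.lower s])
    have i2 := h.integrableOn_weight hε hb h.cont (C := 2) fun s => by
      rw [abs_of_pos (h.pos _)]; exact h.upper s
    refine (i1.add i2).congr_fun (fun s _ => ?_) measurableSet_Ioi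
    simp only [Pi.add_apply]; ring

end IsTimeChange

/-- The perturbation `s ↦ s + δ ζ(s)` of the identity is a time change as soon as `|δ ζ'| ≤ 1/2`. -/
theorem exists_isTimeChange {ζ ζ' : ℝ → ℝ} (hζ : ∀ x, HasDerivAt ζ (ζ' x) x)
    (hc : Continuous ζ') (h0 : ζ 0 = 0) {K : ℝ} (hK : ∀ x, |ζ x| ≤ K) (hK' : ∀ x, |ζ' x| ≤ K)
    {δ : ℝ} (hδ : |δ| * K ≤ 1 / 2) :
    ∃ e : ℝ ≃o ℝ, (∀ s, e s = s + δ * ζ s) ∧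
      IsTimeChange e (fun s => 1 + δ * ζ' s) (1 / 2) := by
  have hb : ∀ s, |δ * ζ' s| ≤ 1 / 2 := fun s => by
    rw [abs_mul]; exact (mul_le_mul_of_nonneg_left (hK' s) (abs_nonneg _)).trans hδ
  have hbz : ∀ s, |δ * ζ s| ≤ 1 / 2 := fun s => by
    rw [abs_mul]; exact (mul_le_mul_of_nonneg_left (hK s) (abs_nonneg _)).trans hδ
  have hd : ∀ s, HasDerivAt (fun s => s + δ * ζ s) (1 + δ * ζ' s) s := fun s =>
    (hasDerivAt_id s).add ((hζ s).const_mul δ)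
  have hcont : Continuous (fun s => s + δ * ζ s) :=
    continuous_iff_continuousAt.2 fun s => (hd s).continuousAt
  have hmono : StrictMono (fun s => s + δ * ζ s) :=
    strictMono_of_hasDerivAt_pos hd fun s => by linarith [(abs_le.1 (hb s)).1]
  have hsurj : Function.Surjective (fun s => s + δ * ζ s) := by
    refine hcont.surjective ?_ ?_
    · exact tendsto_atTop_add_right_of_le _ (-(1 / 2)) tendsto_id fun s => (abs_le.1 (hbz s)).1
    · exact tendsto_atBot_add_right_of_ge _ (1 / 2) tendsto_id fun s => (abs_le.1 (hbz s)).2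
  refine ⟨hmono.orderIsoOfSurjective _ hsurj, fun s => rfl, ⟨by fun_prop, hd, fun s => ?_,
    fun s => ?_, ?_, fun s => ?_⟩⟩
  · linarith [(abs_le.1 (hb s)).1]
  · linarith [(abs_le.1 (hb s)).2]
  · simp [h0]
  · simpa using hbz s

/-! ### The first inner variation -/

/-- First inner variation: the derivative at `δ = 0` of the WED functional along the time changes
`s ↦ s + δ ζ(s)` of a minimizer vanishes. -/
theorem first_variation {X : Type*} [MetricSpace X] {φ : X → EReal} {ε : ℝ} (hε : 0 < ε) {x : X}
    {u : ℝ → X} {m b : ℝ → ℝ} (hmin : IsMinimizer φ ε x u m)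
    (hm2 : Integrable (fun t => m t ^ 2) (expMeasure ε)) (hb : Integrable b (expMeasure ε))
    (hφ : ∀ᵐ t ∂(volume.restrict (Ioi (0:ℝ))), φ (u t) = (b t : EReal))
    {ζ ζ' : ℝ → ℝ} (hζ : ∀ x, HasDerivAt ζ (ζ' x) x)
    (hc : Continuous ζ') (h0 : ζ 0 = 0) {K : ℝ} (hKpos : 0 < K)
    (hK : ∀ x, |ζ x| ≤ K) (hK' : ∀ x, |ζ' x| ≤ K) :
    ∫ s in Ioi (0:ℝ), ε⁻¹ * Real.exp (-s / ε) *
      ((b s - ε / 2 * m s ^ 2) * ζ' s - ζ s / ε * (ε / 2 * m s ^ 2 + b s)) = 0 := by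
  set a : ℝ → ℝ := fun s => ε / 2 * m s ^ 2 with ha
  set F : ℝ → ℝ → ℝ := fun δ s => ε⁻¹ * Real.exp (-(s + δ * ζ s) / ε) *
    (a s / (1 + δ * ζ' s) + b s * (1 + δ * ζ' s)) with hF
  set F' : ℝ → ℝ → ℝ := fun δ s => ε⁻¹ * Real.exp (-(s + δ * ζ s) / ε) *
    (-(ζ s / ε) * (a s / (1 + δ * ζ' s) + b s * (1 + δ * ζ' s)) +
      (-(a s * ζ' s) / (1 + δ * ζ' s) ^ 2 + b s * ζ' s)) with hF'
  have hζc : Continuous ζ := continuous_iff_continuousAt.2 fun s => (hζ s).continuousAt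
  have haI : Integrable a (expMeasure ε) := hm2.const_mul _
  have hmeas : ∀ {f : ℝ → ℝ}, Integrable f (expMeasure ε) →
      AEStronglyMeasurable f (volume.restrict (Ioi 0)) := by
    intro f hf
    obtain ⟨g, hg, hfg⟩ := hf.aestronglyMeasurable
    exact ⟨g, hg, (ae_expMeasure_iff hε _).1 hfg⟩
  have ham := hmeas haI
  have hbm := hmeas hb
  set r : ℝ := 1 / (2 * K) with hr
  have hrpos : 0 < r := by positivity
  have hball : ∀ δ ∈ Metric.ball (0:ℝ) r, |δ| * K ≤ 1 / 2 := by
    intro δ hδ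
    rw [mem_ball_zero_iff, Real.norm_eq_abs] at hδ
    calc |δ| * K ≤ r * K := by gcongr
      _ = 1 / 2 := by rw [hr]; field_simp
  have hlow : ∀ δ ∈ Metric.ball (0:ℝ) r, ∀ s, |δ * ζ' s| ≤ 1 / 2 := fun δ hδ s => by
    rw [abs_mul]
    exact (mul_le_mul_of_nonneg_left (hK' s) (abs_nonneg _)).trans (hball δ hδ)
  have hlowz : ∀ δ ∈ Metric.ball (0:ℝ) r, ∀ s, |δ * ζ s| ≤ 1 / 2 := fun δ hδ s => by
    rw [abs_mul]
    exact (mul_le_mul_of_nonneg_left (hK s) (abs_nonneg _)).trans (hball δ hδ)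
  -- at `δ = 0` the time change is the identity, so `F 0` gives the energy of `u` itself
  have hJ : ∀ δ ∈ Metric.ball (0:ℝ) r, ∫ s in Ioi (0:ℝ), F 0 s ≤ ∫ s in Ioi (0:ℝ), F δ s := by
    intro δ hδ
    obtain ⟨e, he, hT⟩ := exists_isTimeChange hζ hc h0 hK hK' (hball δ hδ)
    have h1 := hmin.2 _ _ (hT.admissible hε hmin.1 hm2)
    rw [hT.wedFun_eq hε hm2 hb hφ] at h1
    have h2 : WEDfun φ ε u m = ((∫ s in Ioi (0:ℝ), F 0 s : ℝ) : EReal) := by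
      rw [WEDfun, eIntegral_eq_integral (g := fun t => a t + b t), integral_expMeasure hε]
      · simp [hF]
      · rw [ae_expMeasure_iff hε]
        filter_upwards [hφ] with t ht
        rw [wedIntegrand, ht, EReal.coe_add]
      · exact haI.add hb
    rw [h2, EReal.coe_le_coe_iff] at h1
    simpa only [hF, he] using h1
  have hlocmin : IsLocalMin (fun δ => ∫ s in Ioi (0:ℝ), F δ s) 0 := by
    filter_upwards [Metric.ball_mem_nhds (0:ℝ) hrpos] with δ hδ using hJ δ hδ
  have hder : HasDerivAt (fun δ => ∫ s in Ioi (0:ℝ), F δ s) (∫ s in Ioi (0:ℝ), F' 0 s) 0 := by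
    refine (hasDerivAt_integral_of_dominated_loc_of_deriv_le
      (bound := fun s => ε⁻¹ * Real.exp (-s / ε) * (Real.exp (1 / 2 / ε) *
        (K / ε * (2 * |a s| + 2 * |b s|) + (4 * K * |a s| + K * |b s|))))
      (Metric.ball_mem_nhds (0:ℝ) hrpos) ?_ ?_ ?_ ?_ ?_ ?_).2
    · filter_upwards with δ
      have h1 : AEStronglyMeasurable (fun s => ε⁻¹ * Real.exp (-(s + δ * ζ s) / ε))
          (volume.restrict (Ioi 0)) := Continuous.aestronglyMeasurable (by fun_prop)
      have h2 : Measurable (fun s => (1 + δ * ζ' s)⁻¹) := by fun_prop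
      have h3 : Continuous (fun s => 1 + δ * ζ' s) := by fun_prop
      simp only [hF, div_eq_mul_inv _ (1 + δ * ζ' _)]
      exact h1.mul ((ham.mul h2.aestronglyMeasurable).add (hbm.mul h3.aestronglyMeasurable))
    · have := (integrable_expMeasure_iff hε _).1 (haI.add hb)
      simpa [hF, IntegrableOn] using this
    · have h1 : AEStronglyMeasurable (fun s => ε⁻¹ * Real.exp (-s / ε))
          (volume.restrict (Ioi 0)) := Continuous.aestronglyMeasurable (by fun_prop)
      have h2 : AEStronglyMeasurable (fun s => -(ζ s / ε))
          (volume.restrict (Ioi 0)) := Continuous.aestronglyMeasurable (by fun_prop)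
      have h3 : AEStronglyMeasurable ζ' (volume.restrict (Ioi 0)) := hc.aestronglyMeasurable
      have := h1.mul ((h2.mul (ham.add hbm)).add ((ham.mul h3).neg.add (hbm.mul h3)))
      refine this.congr (ae_of_all _ fun s => ?_)
      simp [hF']
    · refine ae_of_all _ fun s δ hδ => ?_
      have hz := hlowz δ hδ s
      have hz' := hlow δ hδ s
      set p := 1 + δ * ζ' s with hp
      have hp1 : 1 / 2 ≤ p := by linarith [(abs_le.1 hz').1]
      have hp2 : p ≤ 2 := by linarith [(abs_le.1 hz').2]
      have hp0 : 0 < p := by linarith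
      have hpi : p⁻¹ ≤ 2 := inv_le_of_inv_le₀ (by norm_num) (by linarith)
      have hpi0 : 0 < p⁻¹ := inv_pos.2 hp0
      have e1 : Real.exp (-(s + δ * ζ s) / ε) ≤ Real.exp (-s / ε) * Real.exp (1 / 2 / ε) := by
        rw [← Real.exp_add, ← add_div]
        gcongr
        linarith [(abs_le.1 hz).1]
      have e2 : |a s / p + b s * p| ≤ 2 * |a s| + 2 * |b s| := by
        refine (abs_add_le _ _).trans ?_
        rw [div_eq_mul_inv, abs_mul (a s), abs_mul (b s), abs_of_pos hpi0, abs_of_pos hp0]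
        nlinarith [abs_nonneg (a s), abs_nonneg (b s)]
      have e3 : |-(a s * ζ' s) / p ^ 2 + b s * ζ' s| ≤ 4 * K * |a s| + K * |b s| := by
        refine (abs_add_le _ _).trans ?_
        have hpp : (p ^ 2)⁻¹ ≤ 4 := by
          rw [← inv_pow]; nlinarith
        rw [div_eq_mul_inv, abs_mul (-(a s * ζ' s)), abs_neg, abs_mul (a s), abs_mul (b s),
          abs_of_pos (inv_pos.2 (pow_pos hp0 2))]
        have := hK' s
        have t1 : |a s| * |ζ' s| * (p ^ 2)⁻¹ ≤ |a s| * K * 4 := by gcongr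
        have t2 : |b s| * |ζ' s| ≤ |b s| * K := by gcongr
        linarith
      have e4 : |-(ζ s / ε)| ≤ K / ε := by
        rw [abs_neg, abs_div, abs_of_pos hε]; have := hK s; gcongr
      simp only [hF', ← hp]
      rw [Real.norm_eq_abs, abs_mul, abs_of_pos (by positivity)]
      calc _ ≤ ε⁻¹ * (Real.exp (-s / ε) * Real.exp (1 / 2 / ε)) *
            (K / ε * (2 * |a s| + 2 * |b s|) + (4 * K * |a s| + K * |b s|)) := by
            gcongr
            refine (abs_add_le _ _).trans (add_le_add ?_ e3)
            rw [abs_mul]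
            gcongr
        _ = _ := by ring
    · have := ((((haI.abs.const_mul 2).add (hb.abs.const_mul 2)).const_mul (K / ε)).add
        ((haI.abs.const_mul (4 * K)).add (hb.abs.const_mul K))).const_mul (Real.exp (1 / 2 / ε))
      exact (integrable_expMeasure_iff hε _).1 this
    · refine ae_of_all _ fun s δ hδ => ?_
      have hz' := hlow δ hδ s
      have hp0 : 1 + δ * ζ' s ≠ 0 := by
        have := (abs_le.1 hz').1; intro h; linarith
      have d1 : HasDerivAt (fun δ : ℝ => 1 + δ * ζ' s) (ζ' s) δ := by
        simpa using ((hasDerivAt_id δ).mul_const (ζ' s)).const_add 1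
      have d2 : HasDerivAt (fun δ : ℝ => -(s + δ * ζ s) / ε) (-(ζ s) / ε) δ := by
        simpa using ((((hasDerivAt_id δ).mul_const (ζ s)).const_add s).neg).div_const ε
      have d3 := (d2.exp.const_mul ε⁻¹).mul
        (((hasDerivAt_const δ (a s)).div d1 hp0).add (d1.const_mul (b s)))
      refine d3.congr_deriv ?_
      simp only [hF', Pi.add_apply, Pi.div_apply]
      ring
  refine Eq.trans ?_ (hlocmin.hasDerivAt_eq_zero hder)
  refine setIntegral_congr_fun measurableSet_Ioi fun s _ => ?_
  simp only [hF', zero_mul, add_zero, div_one, one_pow]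
  ring

/-! ### Integrability of the energy of a minimizer -/

/-- By the compatibility condition (MT2), convergence in the metric implies convergence in `σ`. -/
theorem Compatible.tendsto_of_dist {X : Type*} [MetricSpace X] {σ : TopologicalSpace X}
    (hcomp : Compatible σ) {v : ℕ → X} {x : X}
    (hv : Tendsto (fun n => dist (v n) x) atTop (𝓝 0)) :
    Tendsto v atTop (@nhds X σ x) := by
  refine (@tendsto_nhds X σ ℕ x v atTop).2 fun U hU hxU => ?_
  obtain ⟨V, -, hxV, δ, hδ, h⟩ := hcomp.mt2 U hU x hxU
  filter_upwards [hv.eventually_lt_const hδ] with n hn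
  exact h _ ((Metric.infDist_le_dist_of_mem hxV).trans_lt hn)

/-- Extending a curve on `[0,∞)` by its initial value gives a continuous curve on `ℝ`. -/
theorem IsMetricDerivOn.continuous_max {X : Type*} [MetricSpace X] {u : ℝ → X} {m : ℝ → ℝ}
    (h : IsMetricDerivOn u m (Ici 0)) : Continuous fun t => u (max t 0) := by
  set M : ℝ → ℝ := (Ici (0:ℝ)).indicator m
  have hM : ∀ a b, IntervalIntegrable M volume a b := by
    have : ∀ a b, IntegrableOn M (Ioc a b) := fun a b => by
      rw [integrableOn_indicator_iff measurableSet_Ici]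
      refine (h.locInt 0 (by simp) (max b 0) (by simp)).mono_set fun r hr => ?_
      exact ⟨hr.1, hr.2.2.trans (le_max_left _ _)⟩
    exact fun a b => ⟨this a b, this b a⟩
  set G : ℝ → ℝ := fun t => ∫ r in (0:ℝ)..t, M r
  have hG : Continuous G := intervalIntegral.continuous_primitive hM 0
  have hle : ∀ s ∈ Ici (0:ℝ), ∀ t, s ≤ t → dist (u s) (u t) ≤ |G s - G t| := by
    intro s hs t hst
    refine (h.dist_le s hs t (hs.trans hst) hst).trans ?_
    rw [abs_sub_comm]
    refine le_trans (le_of_eq ?_) (le_abs_self _)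
    rw [intervalIntegral.integral_interval_sub_left (hM _ _) (hM _ _),
      intervalIntegral.integral_of_le hst, integral_Icc_eq_integral_Ioc]
    refine setIntegral_congr_fun measurableSet_Ioc fun r hr => ?_
    exact (indicator_of_mem (show r ∈ Ici (0:ℝ) from hs.trans hr.1.le) m).symm
  have hle' : ∀ s ∈ Ici (0:ℝ), ∀ t ∈ Ici (0:ℝ), dist (u s) (u t) ≤ |G s - G t| := by
    intro s hs t ht
    rcases le_total s t with hst | hst
    · exact hle s hs t hst
    · rw [dist_comm, abs_sub_comm]; exact hle t ht s hst
  refine continuous_iff_continuousAt.2 fun t => ?_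
  refine tendsto_iff_dist_tendsto_zero.2 (squeeze_zero (fun _ => dist_nonneg)
    (fun s => hle' (max s 0) (mem_Ici.2 (le_max_right _ _)) (max t 0)
      (mem_Ici.2 (le_max_right _ _))) ?_)
  have hc : Continuous fun s => |G (max s 0) - G (max t 0)| := by fun_prop
  simpa using hc.tendsto t

theorem exists_dist_le_of_continuous {X : Type*} [MetricSpace X] {v : ℝ → X} (hv : Continuous v)
    {s : ℕ → ℝ} {t : ℝ} (hst : Tendsto s atTop (𝓝 t)) :
    (∃ C : ℝ, ∀ n k, dist (v (s n)) (v (s k)) ≤ C) ∧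
      Tendsto (fun n => dist (v (s n)) (v t)) atTop (𝓝 0) := by
  have hvs : Tendsto (fun n => v (s n)) atTop (𝓝 (v t)) := (hv.tendsto t).comp hst
  obtain ⟨C, hC⟩ := Metric.isBounded_iff.1 (Metric.isBounded_range_of_tendsto _ hvs)
  exact ⟨⟨C, fun n k => hC (mem_range_self n) (mem_range_self k)⟩,
    tendsto_iff_dist_tendsto_zero.1 hvs⟩

/-- The energy along a continuous curve is lower semicontinuous, hence measurable. -/
theorem measurable_energy_comp {X : Type*} [MetricSpace X] {v : ℝ → X} (hv : Continuous v)
    {σ : TopologicalSpace X} (hcomp : Compatible σ) {φ : X → EReal} {ustar : X} {A B : ℝ}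
    (hφ : LSCC σ φ ustar A B) : Measurable fun t => φ (v t) := by
  refine LowerSemicontinuous.measurable (lowerSemicontinuous_iff_isClosed_preimage.2 fun y => ?_)
  refine IsSeqClosed.isClosed fun s t hs hst => ?_
  obtain ⟨hC, hd⟩ := exists_dist_le_of_continuous hv hst
  refine (hφ.lsc _ _ hC (hcomp.tendsto_of_dist hd)).trans ?_
  exact liminf_le_of_frequently_le' (Frequently.of_forall hs)

theorem admissible_const {X : Type*} [MetricSpace X] (ε : ℝ) (x : X) :
    Admissible ε x (fun _ => x) (fun _ => 0) := by
  refine ⟨rfl, ⟨⟨fun _ => le_rfl, fun _ _ _ _ => integrableOn_zero, fun _ _ _ _ _ => by simp, ?_⟩,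
    fun _ _ _ _ => by simp⟩, by simp⟩
  exact ae_of_all _ fun t => by simpa using tendsto_const_nhds

/-- Along an admissible curve, the squared distance from the initial point is `μ_ε`-integrable. -/
theorem Admissible.lintegral_dist_sq_lt_top {X : Type*} [MetricSpace X] {ε : ℝ} (hε : 0 < ε)
    {x : X} {u : ℝ → X} {m : ℝ → ℝ} (h : Admissible ε x u m) :
    (∫⁻ t, ENNReal.ofReal (dist (u t) x ^ 2) ∂expMeasure ε) < ⊤ := by
  obtain ⟨h0, ⟨hmd, -⟩, hfin⟩ := h
  refine lt_of_le_of_lt (lintegral_mono_ae ?_)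
    (lintegral_primitive_sq_lt_top hε hmd.nonneg hmd.locInt hfin)
  rw [ae_expMeasure_iff hε]
  filter_upwards [ae_restrict_mem measurableSet_Ioi] with t ht
  have := hmd.dist_le 0 (by simp) t (mem_Ici.2 (le_of_lt ht)) (le_of_lt ht)
  rw [h0, dist_comm] at this
  gcongr

/-- A minimizer has finite, integrable energy. The negative part is controlled by the coercivity
of `φ`, the positive part by comparison with the constant curve. -/
theorem IsMinimizer.integrable {X : Type*} [MetricSpace X] {σ : TopologicalSpace X}
    (hcomp : Compatible σ) {φ : X → EReal} {ustar : X} {A B : ℝ} (hφ : LSCC σ φ ustar A B)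
    {ε : ℝ} (hε : 0 < ε) {ubar : X} (hubar : φ ubar ≠ ⊤)
    {u : ℝ → X} {m : ℝ → ℝ} (hmin : IsMinimizer φ ε ubar u m) :
    Integrable (fun t => m t ^ 2) (expMeasure ε) ∧
    Integrable (fun t => (φ (u t)).toReal) (expMeasure ε) ∧
    ∀ᵐ t ∂(volume.restrict (Ioi (0:ℝ))), φ (u t) = ((φ (u t)).toReal : EReal) := by
  have hfm := isFiniteMeasure_expMeasure hε
  obtain ⟨hadm, hle⟩ := hmin
  have hd := hadm.lintegral_dist_sq_lt_top hε
  obtain ⟨h0, ⟨hmd, hsq⟩, hfin⟩ := hadm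
  have hsm : ∀ {f : ℝ → ℝ} (_ : ∀ s ∈ Ici (0:ℝ), ∀ t ∈ Ici (0:ℝ), IntegrableOn f (Icc s t)),
      AEStronglyMeasurable f (expMeasure ε) := by
    intro f hf
    have hsub : Ioi (0:ℝ) ⊆ ⋃ n : ℕ, Icc (0:ℝ) n := fun x hx => by
      obtain ⟨n, hn⟩ := exists_nat_ge x
      exact mem_iUnion.2 ⟨n, le_of_lt hx, hn⟩
    have h1 : AEStronglyMeasurable f (volume.restrict (⋃ n : ℕ, Icc (0:ℝ) n)) :=
      aestronglyMeasurable_iUnion_iff.2 fun n =>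
        (hf 0 (by simp) n (by simp)).aestronglyMeasurable
    exact (h1.mono_measure (Measure.restrict_mono hsub le_rfl)).mono_ac
      (withDensity_absolutelyContinuous _ _)
  have hm2 : Integrable (fun t => m t ^ 2) (expMeasure ε) := by
    refine ⟨hsm hsq, ?_⟩
    rwa [hasFiniteIntegral_iff_ofReal (ae_of_all _ fun t => sq_nonneg _)]
  have hΦ : AEMeasurable (fun t => φ (u t)) (expMeasure ε) := by
    refine ⟨_, measurable_energy_comp hmd.continuous_max hcomp hφ, ?_⟩
    refine (ae_expMeasure_iff hε _).2 ?_
    filter_upwards [ae_restrict_mem measurableSet_Ioi] with t ht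
    rw [max_eq_left (le_of_lt ht)]
  set C : ℝ := B * dist ubar ustar ^ 2 + A with hC
  have hlow : ∀ t, ((-(B * dist (u t) ubar ^ 2 + C) : ℝ) : EReal) ≤ φ (u t) :=
    fun t => hφ.coercive (u t) ubar
  have hdfin : (∫⁻ t, ENNReal.ofReal (B * dist (u t) ubar ^ 2 + C) ∂expMeasure ε) < ⊤ := by
    have : ∀ t, ENNReal.ofReal (B * dist (u t) ubar ^ 2 + C) ≤
        ENNReal.ofReal B * ENNReal.ofReal (dist (u t) ubar ^ 2) + ENNReal.ofReal C := fun t => by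
      rw [← ENNReal.ofReal_mul hφ.hB]; exact ENNReal.ofReal_add_le
    refine lt_of_le_of_lt (lintegral_mono this) ?_
    rw [lintegral_add_right _ measurable_const, lintegral_const_mul' _ _ ENNReal.ofReal_ne_top,
      lintegral_const]
    exact ENNReal.add_lt_top.2 ⟨ENNReal.mul_lt_top ENNReal.ofReal_lt_top hd,
      ENNReal.mul_lt_top ENNReal.ofReal_lt_top (measure_lt_top _ _)⟩
  have hcase : ∀ t, φ (u t) = ⊤ ∨ φ (u t) = ((φ (u t)).toReal : EReal) := fun t => by
    by_cases ht : φ (u t) = ⊤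
    · exact Or.inl ht
    · exact Or.inr (EReal.coe_toReal ht (hφ.ne_bot _)).symm
  have hbneg : ∀ t, -(φ (u t)).toReal ≤ B * dist (u t) ubar ^ 2 + C := fun t => by
    rcases hcase t with ht | ht
    · rw [ht]; have := hφ.hB; have := hφ.hA; simp [hC]; positivity
    · have := hlow t
      rw [ht, EReal.coe_le_coe_iff] at this
      linarith
  have hNeg : (∫⁻ t, epos (-wedIntegrand φ ε u m t) ∂expMeasure ε) < ⊤ := by
    refine lt_of_le_of_lt (lintegral_mono fun t => ?_) hdfin
    rcases hcase t with ht | ht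
    · rw [wedIntegrand, ht, EReal.coe_add_top]
      simp [epos]
    · rw [wedIntegrand, ht, ← EReal.coe_add, ← EReal.coe_neg, epos_coe]
      refine ENNReal.ofReal_le_ofReal ?_
      have : 0 ≤ ε / 2 * m t ^ 2 := by positivity
      linarith [hbneg t]
  -- upper bound, by comparison with the constant curve
  have hconst : WEDfun φ ε u m < ⊤ := by
    refine (hle _ _ (admissible_const ε ubar)).trans_lt ?_
    rw [WEDfun, eIntegral_eq_integral (g := fun _ => (φ ubar).toReal) _ (integrable_const _)]
    · exact EReal.coe_lt_top _
    · refine ae_of_all _ fun t => ?_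
      simp [wedIntegrand, EReal.coe_toReal hubar (hφ.ne_bot _)]
  have hPos : (∫⁻ t, epos (wedIntegrand φ ε u m t) ∂expMeasure ε) < ⊤ := by
    by_contra hcon
    rw [not_lt, top_le_iff] at hcon
    rw [WEDfun, eIntegral, hcon, ← EReal.coe_ennreal_toReal hNeg.ne] at hconst
    simp at hconst
  have hposΦ : ∀ t, epos (φ (u t)) ≤ epos (wedIntegrand φ ε u m t) := fun t => by
    rcases hcase t with ht | ht
    · rw [wedIntegrand, ht, EReal.coe_add_top]
    · rw [wedIntegrand, ht, ← EReal.coe_add, epos_coe, epos_coe]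
      refine ENNReal.ofReal_le_ofReal ?_
      have : 0 ≤ ε / 2 * m t ^ 2 := by positivity
      linarith
  have hΦfin : (∫⁻ t, epos (φ (u t)) ∂expMeasure ε) < ⊤ := (lintegral_mono hposΦ).trans_lt hPos
  have heposm : Measurable epos :=
    Measurable.ite (measurableSet_singleton _) measurable_const
      measurable_ereal_toReal.ennreal_ofReal
  have hfinite : ∀ᵐ t ∂expMeasure ε, φ (u t) = ((φ (u t)).toReal : EReal) := by
    filter_upwards [ae_lt_top' (heposm.comp_aemeasurable hΦ) hΦfin.ne] with t ht
    refine (hcase t).resolve_left fun htop => ?_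
    simp [htop, epos] at ht
  refine ⟨hm2, ⟨(measurable_ereal_toReal.comp_aemeasurable hΦ).aestronglyMeasurable, ?_⟩, (ae_expMeasure_iff hε _).1 hfinite⟩
  refine lt_of_le_of_lt (lintegral_mono_ae (g := fun t => epos (φ (u t)) +
    ENNReal.ofReal (B * dist (u t) ubar ^ 2 + C)) ?_) ?_
  · filter_upwards [hfinite] with t ht
    rw [ht, epos_coe, EReal.toReal_coe, Real.enorm_eq_ofReal_abs]
    have h1 := hbneg t
    rcases abs_cases (φ (u t)).toReal with ⟨h, -⟩ | ⟨h, -⟩ <;> rw [h]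
    · exact le_self_add
    · exact (ENNReal.ofReal_le_ofReal h1).trans le_add_self
  · rw [lintegral_add_left' (show AEMeasurable (fun t => epos (φ (u t))) _ from
      heposm.comp_aemeasurable hΦ)]
    exact ENNReal.add_lt_top.2 ⟨hΦfin, hdfin⟩

/-! ### A du Bois-Reymond lemma on the half line -/

theorem integrable_mul_of_eq_zero {f k : ℝ → ℝ} {p q : ℝ} (hp : 0 ≤ p) (hpq : p ≤ q)
    (hf : ∀ T, 0 ≤ T → IntegrableOn f (Icc 0 T)) (hk : Continuous k)
    (hk0 : ∀ x ∉ Icc p q, k x = 0) : Integrable fun x => f x * k x := by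
  have hsub : Function.support (fun x => f x * k x) ⊆ Icc p q := fun x hx => by
    by_contra h
    exact hx (by simp [hk0 x h])
  refine (integrableOn_iff_integrable_of_support_subset hsub).1 ?_
  exact ((hf q (hp.trans hpq)).mono_set (Icc_subset_Icc_left hp)).mul_continuousOn
    hk.continuousOn isCompact_Icc

/-- Integration by parts for the primitive of a locally integrable function against a compactly
supported `C¹` function. -/
theorem integral_mul_eq_neg_primitive {f h η : ℝ → ℝ} {p q : ℝ} (hp : 0 < p) (hpq : p < q)
    (hf : ∀ T, 0 ≤ T → IntegrableOn f (Icc 0 T)) (hh : Continuous h)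
    (hη : ∀ x, HasDerivAt η (h x) x) (h0 : ∀ x ∉ Icc p q, h x = 0) (η0 : ∀ x ∉ Icc p q, η x = 0) :
    ∫ x, f x * η x = -∫ x, (∫ r in (0:ℝ)..x, f r) * h x := by
  have hq : 0 < q + 1 := by linarith
  have hfi : IntervalIntegrable f volume 0 (q + 1) :=
    (intervalIntegrable_iff_integrableOn_Icc_of_le hq.le).2 (hf _ hq.le)
  have hd : deriv η = h := funext fun x => (hη x).deriv
  have hC1 : ContDiff ℝ 1 η := contDiff_one_iff_deriv.2
    ⟨fun x => (hη x).differentiableAt, by rw [hd]; exact hh⟩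
  have key := (hfi.absolutelyContinuousOnInterval_intervalIntegral (c := 0)
    (by simp)).integral_mul_deriv_eq_deriv_mul
      (hC1.contDiffOn.absolutelyContinuousOnInterval (a := 0) (b := q + 1))
  have hIoc : Icc p q ⊆ Ioc 0 (q + 1) := fun x hx => ⟨hp.trans_le hx.1, by linarith [hx.2]⟩
  have hsub : ∀ {k l : ℝ → ℝ} (_ : ∀ x ∉ Icc p q, k x = 0),
      Function.support (fun x => l x * k x) ⊆ Ioc 0 (q + 1) := fun {k l} hk x hx => by
    by_contra h
    exact hx (by simp [hk x fun h' => h (hIoc h')])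
  rw [hd, η0 (q + 1) (by simp), η0 0 (fun h => hp.not_ge h.1),
    intervalIntegral.integral_eq_integral_of_support_subset (hsub h0)] at key
  rw [key, ← intervalIntegral.integral_eq_integral_of_support_subset (hsub η0)]
  simp only [mul_zero, sub_zero, zero_sub, neg_neg]
  refine intervalIntegral.integral_congr_ae ?_
  filter_upwards [hfi.ae_hasDerivAt_integral] with x hx hx'
  rw [(hx (uIoc_subset_uIcc hx') 0 (by simp)).deriv]

/-- A du Bois-Reymond lemma on `(0,∞)`: if `w' = -f` in the sense of distributions, then `w`
agrees almost everywhere with a constant minus the primitive of `f`. -/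
theorem exists_ae_eq_sub_primitive {w f : ℝ → ℝ}
    (hw : ∀ T, 0 ≤ T → IntegrableOn w (Icc 0 T)) (hf : ∀ T, 0 ≤ T → IntegrableOn f (Icc 0 T))
    (H : ∀ (h η : ℝ → ℝ) (p q : ℝ), 0 < p → p < q → Continuous h →
      (∀ x, HasDerivAt η (h x) x) → (∀ x ∉ Icc p q, h x = 0) → (∀ x ∉ Icc p q, η x = 0) →
      ∫ s, (w s * h s - f s * η s) = 0) :
    ∃ c : ℝ, ∀ᵐ t ∂(volume.restrict (Ioi (0:ℝ))), w t = c - ∫ r in Icc 0 t, f r := by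
  set F : ℝ → ℝ := fun x => ∫ r in (0:ℝ)..x, f r with hF
  have hFi : ∀ T, 0 ≤ T → IntegrableOn F (Icc 0 T) := fun T hT => by
    have hfi : IntervalIntegrable f volume 0 T :=
      (intervalIntegrable_iff_integrableOn_Icc_of_le hT).2 (hf _ hT)
    have := (hfi.absolutelyContinuousOnInterval_intervalIntegral (c := 0)
      (by simp)).continuousOn
    rw [uIcc_of_le hT] at this
    exact this.integrableOn_Icc
  have hWi : ∀ T, 0 ≤ T → IntegrableOn (fun x => w x + F x) (Icc 0 T) :=
    fun T hT => (hw T hT).add (hFi T hT)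
  -- `w + F` is orthogonal to the continuous compactly supported functions of mean zero
  have horth : ∀ (h : ℝ → ℝ) (p q : ℝ), 0 < p → p < q → Continuous h →
      (∀ x ∉ Icc p q, h x = 0) → ∫ x, h x = 0 → ∫ x, (w x + F x) * h x = 0 := by
    intro h p q hp hpq hh h0 hint
    set η : ℝ → ℝ := fun x => ∫ r in p..x, h r with hηdef
    have hη : ∀ x, HasDerivAt η (h x) x := fun x =>
      intervalIntegral.integral_hasDerivAt_right (hh.intervalIntegrable _ _)
        hh.stronglyMeasurable.stronglyMeasurableAtFilter hh.continuousAt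
    have hpr : h p = 0 := by
      have hev : ∀ᶠ y in 𝓝[<] p, h y = 0 := by
        filter_upwards [self_mem_nhdsWithin] with y hy
        exact h0 y fun h' => (not_le.2 hy) h'.1
      exact tendsto_nhds_unique_of_eventuallyEq
        (hh.continuousAt.tendsto.mono_left nhdsWithin_le_nhds) tendsto_const_nhds hev
    have η0 : ∀ x ∉ Icc p q, η x = 0 := by
      intro x hx
      rcases lt_or_ge x p with hxp | hxp
      · rw [hηdef]
        refine (intervalIntegral.integral_congr_ae (g := fun _ => 0)
          (ae_of_all _ fun r hr => ?_)).trans (by simp)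
        rw [uIoc_of_ge hxp.le] at hr
        rcases hr.2.lt_or_eq with hrp | hrp
        · exact h0 r fun h' => hrp.not_ge h'.1
        · rw [hrp, hpr]
      · have hqx : q < x := lt_of_not_ge fun h' => hx ⟨hxp, h'⟩
        rw [hηdef, ← hint]
        refine intervalIntegral.integral_eq_integral_of_support_subset fun r hr => ?_
        have hr' : r ∈ Icc p q := by_contra fun h' => hr (h0 r h')
        refine ⟨lt_of_le_of_ne hr'.1 ?_, hr'.2.trans hqx.le⟩
        rintro rfl
        exact hr hpr
    have hηc : Continuous η := continuous_iff_continuousAt.2 fun x => (hη x).continuousAt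
    have h1 := H h η p q hp hpq hh hη h0 η0
    rw [integral_sub (integrable_mul_of_eq_zero hp.le hpq.le hw hh h0)
      (integrable_mul_of_eq_zero hp.le hpq.le hf hηc η0),
      integral_mul_eq_neg_primitive hp hpq hf hh hη h0 η0, sub_neg_eq_add] at h1
    rw [← h1, ← integral_add (integrable_mul_of_eq_zero hp.le hpq.le hw hh h0)
      (integrable_mul_of_eq_zero hp.le hpq.le hFi hh h0)]
    exact integral_congr_ae (ae_of_all _ fun x => add_mul _ _ _)
  let β : ContDiffBump (1:ℝ) := ⟨1 / 4, 1 / 2, by norm_num, by norm_num⟩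
  set ψ : ℝ → ℝ := β.normed volume with hψ
  have hψc : Continuous ψ := β.continuous_normed
  have hψ0 : ∀ x ∉ Icc (1 / 2 : ℝ) (3 / 2), ψ x = 0 := fun x hx => by
    refine image_eq_zero_of_notMem_tsupport fun h' => hx ?_
    rw [hψ, β.tsupport_normed_eq, Real.closedBall_eq_Icc] at h'
    exact ⟨by have := h'.1; norm_num [β] at this ⊢; linarith,
      by have := h'.2; norm_num [β] at this ⊢; linarith⟩
  have hψ1 : ∫ x, ψ x = 1 := β.integral_normed
  set c : ℝ := ∫ x, (w x + F x) * ψ x with hc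
  refine ⟨c, ?_⟩
  have hloc : LocallyIntegrableOn (fun x => w x + F x - c) (Ioi 0) volume := by
    refine (locallyIntegrableOn_iff isOpen_Ioi.isLocallyClosed).2 fun K hK hKc => ?_
    obtain ⟨T, hT⟩ := hKc.isBounded.subset_closedBall 0
    rw [Real.closedBall_eq_Icc] at hT
    refine (((hWi (max T 0) (le_max_right _ _)).sub
      (integrableOn_const (by simp) (by simp))).mono_set fun x hx => ?_)
    exact ⟨le_of_lt (hK hx), (by simpa using (hT hx).2 : x ≤ T).trans (le_max_left _ _)⟩
  have := isOpen_Ioi.ae_eq_zero_of_integral_contDiff_smul_eq_zero hloc ?_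
  · rw [ae_restrict_iff' measurableSet_Ioi]
    filter_upwards [this] with t ht ht0
    rw [integral_Icc_eq_integral_Ioc, ← intervalIntegral.integral_of_le (le_of_lt ht0)]
    linarith [ht ht0]
  · intro g hg hgc hgs
    obtain ⟨p, q, hp, hg0⟩ : ∃ p q : ℝ, 0 < p ∧ ∀ x ∉ Icc p q, g x = 0 := by
      rcases (tsupport g).eq_empty_or_nonempty with he | hne
      · exact ⟨1, 1, one_pos, fun x _ => image_eq_zero_of_notMem_tsupport (by simp [he])⟩
      · obtain ⟨p, hp⟩ := hgc.isCompact.exists_isLeast hne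
        obtain ⟨q, hq⟩ := hgc.isCompact.exists_isGreatest hne
        exact ⟨p, q, hgs hp.1, fun x hx => image_eq_zero_of_notMem_tsupport fun h' =>
          hx ⟨hp.2 h', hq.2 h'⟩⟩
    set P := min p (1 / 2) with hP
    set Q := max q (3 / 2) with hQ
    have hPpos : 0 < P := lt_min hp (by norm_num)
    have hPQ : P < Q := (min_le_right _ _).trans_lt
      (lt_of_lt_of_le (by norm_num) (le_max_right _ _))
    have hg0' : ∀ x ∉ Icc P Q, g x = 0 := fun x hx => hg0 x fun h' =>
      hx ⟨(min_le_left _ _).trans h'.1, h'.2.trans (le_max_left _ _)⟩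
    have hψ0' : ∀ x ∉ Icc P Q, ψ x = 0 := fun x hx => hψ0 x fun h' =>
      hx ⟨(min_le_right _ _).trans h'.1, h'.2.trans (le_max_right _ _)⟩
    have hgi : Integrable g := hg.continuous.integrable_of_hasCompactSupport hgc
    have hψi : Integrable ψ := β.integrable_normed
    have hWg := integrable_mul_of_eq_zero hPpos.le hPQ.le hWi hg.continuous hg0'
    have hWψ := integrable_mul_of_eq_zero hPpos.le hPQ.le hWi hψc hψ0'
    have h1 := horth (fun x => g x - (∫ y, g y) * ψ x) P Q hPpos hPQ
      (hg.continuous.sub (hψc.const_mul _)) (fun x hx => by simp [hg0' x hx, hψ0' x hx])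
      (by rw [integral_sub hgi (hψi.const_mul _), integral_const_mul, hψ1]; ring)
    have h2 : ∫ x, (w x + F x) * (g x - (∫ y, g y) * ψ x) =
        (∫ x, (w x + F x) * g x) - (∫ y, g y) * c := by
      rw [hc, ← integral_const_mul, ← integral_sub hWg (hWψ.const_mul _)]
      exact integral_congr_ae (ae_of_all _ fun x => by ring)
    have h3 : ∫ x, g x • (w x + F x - c) = (∫ x, (w x + F x) * g x) - (∫ y, g y) * c := by
      rw [← integral_mul_const, ← integral_sub hWg (hgi.mul_const _)]
      exact integral_congr_ae (ae_of_all _ fun x => by simp only [smul_eq_mul]; ring)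
    rw [h3, ← h2, h1]


/-! ### The inner-variation equation -/

/-- Integrability with respect to `μ_ε` implies integrability on bounded intervals, the density
being bounded below there. -/
theorem integrableOn_Icc_of_expMeasure {ε : ℝ} (hε : 0 < ε) {g : ℝ → ℝ}
    (hg : Integrable g (expMeasure ε)) (T : ℝ) : IntegrableOn g (Icc 0 T) := by
  have h1 := (integrable_expMeasure_iff hε g).1 hg
  rw [integrableOn_Icc_iff_integrableOn_Ioc]
  have h2 : IntegrableOn (fun t => ε⁻¹ * Real.exp (-t / ε) * g t) (Icc 0 T) := by
    rw [integrableOn_Icc_iff_integrableOn_Ioc]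
    exact h1.mono_set fun x hx => hx.1
  have h3 := h2.continuousOn_mul (g := fun t => ε * Real.exp (t / ε))
    (by fun_prop) isCompact_Icc
  refine (h3.mono_set Ioc_subset_Icc_self).congr_fun (fun t _ => ?_) measurableSet_Ioc
  have : Real.exp (t / ε) * Real.exp (-t / ε) = 1 := by
    rw [← Real.exp_add]; simp [neg_div]
  calc ε * Real.exp (t / ε) * (ε⁻¹ * Real.exp (-t / ε) * g t)
      = (ε * ε⁻¹) * (Real.exp (t / ε) * Real.exp (-t / ε)) * g t := by ring
    _ = g t := by rw [this, mul_inv_cancel₀ (ne_of_gt hε)]; ring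

/-- The vanishing first variation, with the exponential weight absorbed into the test function
`ζ(s) = e^{s/ε} η(s)`. -/
theorem IsMinimizer.inner_variation {X : Type*} [MetricSpace X] {φ : X → EReal} {ε : ℝ}
    (hε : 0 < ε) {x : X} {u : ℝ → X} {m b : ℝ → ℝ} (hmin : IsMinimizer φ ε x u m)
    (hm2 : Integrable (fun t => m t ^ 2) (expMeasure ε)) (hb : Integrable b (expMeasure ε))
    (hφ : ∀ᵐ t ∂(volume.restrict (Ioi (0:ℝ))), φ (u t) = (b t : EReal))
    {h η : ℝ → ℝ} {p q : ℝ} (hp : 0 < p) (hh : Continuous h)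
    (hη : ∀ x, HasDerivAt η (h x) x) (h0 : ∀ x ∉ Icc p q, h x = 0)
    (η0 : ∀ x ∉ Icc p q, η x = 0) :
    ∫ s, ((b s - ε / 2 * m s ^ 2) * h s - m s ^ 2 * η s) = 0 := by
  have hηc : Continuous η := continuous_iff_continuousAt.2 fun x => (hη x).continuousAt
  set ζ : ℝ → ℝ := fun s => Real.exp (s / ε) * η s with hζ
  set ζ' : ℝ → ℝ := fun s => Real.exp (s / ε) * (1 / ε) * η s + Real.exp (s / ε) * h s with hζ'
  have hder : ∀ s, HasDerivAt ζ (ζ' s) s := fun s =>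
    (((hasDerivAt_id s).div_const ε).exp).mul (hη s)
  have hc' : Continuous ζ' := by rw [hζ']; fun_prop
  have hc : Continuous ζ := by rw [hζ]; fun_prop
  have hbd : ∀ {k : ℝ → ℝ}, Continuous k → (∀ x ∉ Icc p q, k x = 0) → ∃ K, ∀ x, |k x| ≤ K :=
    fun {k} hk hk0 => by
      have : HasCompactSupport k := HasCompactSupport.intro isCompact_Icc hk0
      simpa using hk.bounded_above_of_compact_support this
  obtain ⟨K₁, hK₁⟩ := hbd hc fun x hx => by simp [hζ, η0 x hx]
  obtain ⟨K₂, hK₂⟩ := hbd hc' fun x hx => by simp [hζ', η0 x hx, h0 x hx]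
  have key := first_variation hε hmin hm2 hb hφ hder hc'
    (by simp [hζ, η0 0 fun h => hp.not_ge h.1]) (K := max (max K₁ K₂) 1)
    (lt_of_lt_of_le one_pos (le_max_right _ _))
    (fun x => (hK₁ x).trans ((le_max_left _ _).trans (le_max_left _ _)))
    (fun x => (hK₂ x).trans ((le_max_right _ _).trans (le_max_left _ _)))
  have hset : ∫ s, ((b s - ε / 2 * m s ^ 2) * h s - m s ^ 2 * η s) =
      ∫ s in Ioi 0, ((b s - ε / 2 * m s ^ 2) * h s - m s ^ 2 * η s) := by
    refine (setIntegral_eq_integral_of_forall_compl_eq_zero fun s hs => ?_).symm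
    have : s ∉ Icc p q := fun h' => hs (hp.trans_le h'.1)
    simp [h0 s this, η0 s this]
  refine hset.trans (Eq.trans ?_ ((congrArg (fun y => ε * y) key).trans (mul_zero ε)))
  simp only [← integral_const_mul]
  refine setIntegral_congr_fun measurableSet_Ioi fun s _ => ?_
  have he : Real.exp (-s / ε) * Real.exp (s / ε) = 1 := by
    rw [← Real.exp_add]; simp [neg_div]
  have hε' : ε * ε⁻¹ = 1 := mul_inv_cancel₀ hε.ne'
  simp only [hζ, hζ']
  calc (b s - ε / 2 * m s ^ 2) * h s - m s ^ 2 * η s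
      = (ε * ε⁻¹) * (Real.exp (-s / ε) * Real.exp (s / ε)) *
        ((b s - ε / 2 * m s ^ 2) * h s - (ε * ε⁻¹) * m s ^ 2 * η s) := by rw [he, hε']; ring
    _ = _ := by ring

/-- Proposition 3.6, metric inner-variation equation: if `u` minimizes the
WED functional over `𝒜_ū^ε`, then the map `t ↦ φ(u(t)) - (ε/2)|u'|²(t)` has a locally
absolutely continuous representative on `[0,∞)` (hence belongs to `W^{1,1}_loc([0,∞))`)
whose distributional derivative is `-|u'|²`. -/
theorem statement8
    {X : Type*} [MetricSpace X] [CompleteSpace X]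
    (σ : TopologicalSpace X) (hcomp : Compatible σ)
    (φ : X → EReal) (ustar : X) (A B : ℝ) (hφ : LSCC σ φ ustar A B)
    (ε : ℝ) (hε : 0 < ε) (hεB : B ≤ 1 / (16 * ε))
    (ubar : X) (hubar : φ ubar ≠ ⊤)
    (u : ℝ → X) (m : ℝ → ℝ) (hmin : IsMinimizer φ ε ubar u m) :
    ∃ V : ℝ → ℝ,
      (∀ᵐ t ∂(volume.restrict (Ioi (0:ℝ))),
        (V t : EReal) = φ (u t) - ((ε / 2 * m t ^ 2 : ℝ) : EReal)) ∧
      RealACLoc V (fun t => -(m t ^ 2)) := by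
  obtain ⟨hm2, hb, hfin⟩ := hmin.integrable hcomp hφ hε hubar
  have hm2loc : ∀ T : ℝ, 0 ≤ T → IntegrableOn (fun t => m t ^ 2) (Icc 0 T) :=
    fun T _ => integrableOn_Icc_of_expMeasure hε hm2 T
  obtain ⟨c, hc⟩ := exists_ae_eq_sub_primitive
    (w := fun t => (φ (u t)).toReal - ε / 2 * m t ^ 2) (f := fun t => m t ^ 2)
    (fun T hT => (integrableOn_Icc_of_expMeasure hε hb T).sub ((hm2loc T hT).const_mul _)) hm2loc
    (fun h η p q hp _ hh hη h0 η0 => hmin.inner_variation hε hm2 hb hfin hp hh hη h0 η0)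
  refine ⟨fun t => c - ∫ r in Icc 0 t, m r ^ 2, ?_, fun T hT => (hm2loc T hT).neg, fun t _ => ?_⟩
  · filter_upwards [hc, hfin] with t h1 h2
    rw [h2, ← EReal.coe_sub, ← h1]
  · simp [integral_neg, sub_eq_add_neg]

end WED
end
end
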